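/- arXiv:2103.07809 — 2 statements merged into one kernel-verified Lean document; each statement's English description precedes it below -/
import Mathlib

section
/- There is a universal constant C such that the following holds. Let (g_υ)_{υ∈ℝ^I} be a nice distribution of polynomials of degree at most k on ℝ^n, let 0 ≤ λ ≤ 1 and 0 < β' < 1. Then for x ∼ N(0,1)^n, except with probability at most β', we have E_υ[‖(g_υ)_{λ|x}‖₂²] ≥ (β'/(C·k))^{2k}·E_υ[‖g_υ‖₂²]. -/
open MeasureTheory ProbabilityTheory MvPolynomial

/-- The standard Gaussian measure `N(0,1)^n` on `ℝ^n`. -/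
noncomputable def gaussianN (n : ℕ) : Measure (Fin n → ℝ) :=
  Measure.pi fun _ => gaussianReal 0 1

/-- The normalized probabilists' Hermite polynomial `h_k = H_k / √(k!)`. -/
noncomputable def hermiteFn (k : ℕ) (t : ℝ) : ℝ :=
  ((Polynomial.hermite k).map (Int.castRingHom ℝ)).eval t / Real.sqrt (Nat.factorial k)

/-- The multivariate Hermite polynomial `h_α(x) = ∏ i, h_{α i}(x i)`. -/
noncomputable def hermiteMv {n : ℕ} (α : Fin n → ℕ) (x : Fin n → ℝ) : ℝ :=
  ∏ i, hermiteFn (α i) (x i)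

/-- Hermite coefficient `f̂(α) = E_{x ∼ N(0,1)^n}[f(x)·h_α(x)]` of a function. -/
noncomputable def hermiteCoeffF {n : ℕ} (f : (Fin n → ℝ) → ℝ) (α : Fin n → ℕ) : ℝ :=
  ∫ x, f x * hermiteMv α x ∂(gaussianN n)

/-- Hermite coefficient `ĝ(α)` of a polynomial. -/
noncomputable def hermiteCoeff {n : ℕ} (g : MvPolynomial (Fin n) ℝ) (α : Fin n → ℕ) : ℝ :=
  hermiteCoeffF (fun x => eval x g) α

/-- The squared Gaussian 2-norm `‖g‖₂² = E_{x ∼ N(0,1)^n}[g(x)²]`. -/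
noncomputable def norm2sq {n : ℕ} (g : MvPolynomial (Fin n) ℝ) : ℝ :=
  ∫ x, (eval x g) ^ 2 ∂(gaussianN n)

/-- The `λ`-zoom of `g` at `x`: `g_{λ|x}(y) = g(√(1-λ)·x + √λ·y)`, as a polynomial in `y`. -/
noncomputable def zoom {n : ℕ} (g : MvPolynomial (Fin n) ℝ) (lam : ℝ) (x : Fin n → ℝ) :
    MvPolynomial (Fin n) ℝ :=
  aeval (fun i => C (Real.sqrt (1 - lam) * x i) + C (Real.sqrt lam) * X i) g

/-- `HyperVar_R[g^{≥m}] = Σ_{|α| ≥ m} R^{2|α|}·ĝ(α)²`. -/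
noncomputable def hyperVarGE {n : ℕ} (R : ℝ) (m : ℕ) (g : MvPolynomial (Fin n) ℝ) : ℝ :=
  ∑' α : Fin n → ℕ, if m ≤ ∑ i, α i then R ^ (2 * ∑ i, α i) * hermiteCoeff g α ^ 2 else 0

/-- `HyperVar_R[g] = Σ_{α ≠ 0} R^{2|α|}·ĝ(α)²`. -/
noncomputable def hyperVar {n : ℕ} (R : ℝ) (g : MvPolynomial (Fin n) ℝ) : ℝ :=
  hyperVarGE R 1 g

/-- A nice distribution of polynomials of degree at most `d` on `ℝ^n`, indexed by
`υ ∈ ℝ^I`: each `g υ` has degree at most `d` and each coefficient of `g υ` is a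
polynomial of degree at most `d` in `υ`. -/
def NiceFamily (n I d : ℕ) (g : (Fin I → ℝ) → MvPolynomial (Fin n) ℝ) : Prop :=
  (∀ υ, (g υ).totalDegree ≤ d) ∧
  ∀ m : Fin n →₀ ℕ, ∃ P : MvPolynomial (Fin I) ℝ,
    P.totalDegree ≤ d ∧ ∀ υ, coeff m (g υ) = eval υ P

lemma isGaussian_gaussianN (n : ℕ) : IsGaussian (gaussianN n) := by
  have h := HasGaussianLaw.isGaussian_map (P := gaussianN n) (X := fun x i => x i) ?_
  · simpa using h
  · refine iIndepFun.hasGaussianLaw (fun i => ?_) ?_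
    · constructor
      have : (gaussianN n).map (fun x => x i) = gaussianReal 0 1 := by
        simpa [gaussianN] using (measurePreserving_eval (fun _ : Fin n => gaussianReal 0 1) i).map_eq
      rw [this]; infer_instance
    · exact iIndepFun_pi (X := fun _ x => x) (fun i => by fun_prop)

instance (n : ℕ) : IsProbabilityMeasure (gaussianN n) := by
  unfold gaussianN; infer_instance

lemma map_neg_gaussianN (n : ℕ) : (gaussianN n).map (fun x => -x) = gaussianN n := by
  unfold gaussianN
  have h : ∀ i : Fin n, MeasurePreserving (fun x : ℝ => -x) (gaussianReal 0 1)
      (gaussianReal 0 1) := fun i => by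
    refine ⟨by fun_prop, ?_⟩
    rw [gaussianReal_map_neg]; simp
  exact (measurePreserving_pi _ _ h).map_eq

/-- The product of two standard Gaussian measures is invariant under rotation. -/
lemma measurePreserving_rotation_gaussianN (n : ℕ) {s c : ℝ} (h : s ^ 2 + c ^ 2 = 1) :
    MeasurePreserving (fun z : (Fin n → ℝ) × (Fin n → ℝ) =>
      (s • z.1 + c • z.2, -c • z.1 + s • z.2))
      ((gaussianN n).prod (gaussianN n)) ((gaussianN n).prod (gaussianN n)) := by
  refine ⟨by fun_prop, ?_⟩
  obtain ⟨θ, h1, h2⟩ : ∃ θ : ℝ, Real.cos θ = s ∧ Real.sin θ = c := by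
    refine ⟨Complex.arg ⟨s, c⟩, ?_, ?_⟩
    · rw [Complex.cos_arg]
      · simp [Complex.norm_def, Complex.normSq_apply, ← sq, h]
      · intro h0; simp [Complex.ext_iff] at h0; simp [h0] at h
    · rw [Complex.sin_arg]
      simp [Complex.norm_def, Complex.normSq_apply, ← sq, h]
  have := isGaussian_gaussianN n
  have key := IsGaussian.map_rotation_eq_self_of_forall_strongDual_eq_zero (μ := gaussianN n) ?_ θ
  · convert key using 2
    ext z : 1
    simp [ContinuousLinearMap.rotation_apply, h1, h2]
  · intro L
    have h3 : ∫ x, L x ∂(gaussianN n) = ∫ x, L (-x) ∂(gaussianN n) := by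
      conv_lhs => rw [← map_neg_gaussianN]
      rw [integral_map (by fun_prop) (by fun_prop)]
    simp only [map_neg, integral_neg] at h3
    linarith

/-- The truncated kernel `√(|s - t| / |t - x|)`, restricted to `|s - t| * |t - x| < κ`. -/
noncomputable def truncKernel (κ x s t : ℝ) : ℝ :=
  if |s - t| * |t - x| < κ then √(|s - t| / |t - x|) else 0

lemma truncKernel_nonneg (κ x s t : ℝ) : 0 ≤ truncKernel κ x s t := by
  unfold truncKernel; split_ifs <;> positivity

@[fun_prop]
lemma measurable_truncKernel (κ x : ℝ) :
    Measurable fun z : ℝ × ℝ => truncKernel κ x z.1 z.2 := by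
  unfold truncKernel
  refine Measurable.ite (measurableSet_lt (by fun_prop) (by fun_prop)) (by fun_prop) (by fun_prop)

lemma sqrt_div_le_truncKernel_add {κ x s t : ℝ} (hκ : 0 < κ) (ht : t ≠ x) :
    √(|s - t| / |t - x|) ≤ truncKernel κ x s t + |s - t| / √κ := by
  unfold truncKernel
  have hb : 0 < |t - x| := abs_pos.2 (sub_ne_zero.2 ht)
  split_ifs with h
  · have : 0 ≤ |s - t| / √κ := by positivity
    linarith
  · push Not at h
    rw [zero_add]
    apply Real.sqrt_le_iff.2 ⟨by positivity, ?_⟩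
    rw [div_pow, Real.sq_sqrt hκ.le, div_le_div_iff₀ hb hκ]
    nlinarith [abs_nonneg (s - t)]

lemma one_le_avg_of_prod_le {N : ℕ} (hN : 0 < N) {a : Fin N → ℝ} (ha : ∀ j, 0 < a j) {δ : ℝ}
    (hδ : 0 < δ) (h : ∏ j, a j ≤ δ ^ (2 * N)) :
    1 ≤ (1 / (N : ℝ)) * ∑ j, δ / √(a j) := by
  have hN' : (0 : ℝ) < N := by exact_mod_cast hN
  have hz : ∀ j ∈ Finset.univ, 0 ≤ δ / √(a j) := fun j _ => by positivity
  have key := Real.geom_mean_le_arith_mean_weighted Finset.univ (fun _ : Fin N => 1 / (N : ℝ))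
    (fun j => δ / √(a j)) (fun _ _ => by positivity) (by simp [hN'.ne']) hz
  rw [Real.finsetProd_rpow _ _ hz] at key
  rw [Finset.mul_sum]
  refine le_trans ?_ key
  apply Real.one_le_rpow _ (by positivity)
  rw [Finset.prod_div_distrib, one_le_div (Finset.prod_pos fun j _ => Real.sqrt_pos.2 (ha j))]
  rw [← Real.sqrt_prod _ (fun j _ => (ha j).le)]
  apply Real.sqrt_le_iff.2 ⟨by simp; positivity, ?_⟩
  simpa [← pow_mul, mul_comm] using h

lemma abs_sub_le_sum_truncKernel {N : ℕ} (hN : 0 < N) {x : Fin N → ℝ} {δ s t : ℝ} (hδ : 0 < δ)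
    (hs : ∀ j, s ≠ x j) (ht : ∀ j, t ≠ x j) (hs' : ∏ j, |s - x j| ≤ δ ^ N)
    (ht' : ∏ j, |t - x j| ≤ δ ^ N) :
    |s - t| ≤ ∑ j, 2 * δ / N * (truncKernel (16 * δ ^ 2) (x j) s t
      + truncKernel (16 * δ ^ 2) (x j) t s) := by
  have hN' : (0 : ℝ) < N := by exact_mod_cast hN
  have ha : ∀ j, 0 < |s - x j| := fun j => abs_pos.2 (sub_ne_zero.2 (hs j))
  have hb : ∀ j, 0 < |t - x j| := fun j => abs_pos.2 (sub_ne_zero.2 (ht j))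
  have h1 := one_le_avg_of_prod_le hN (a := fun j => |s - x j| * |t - x j|)
    (fun j => mul_pos (ha j) (hb j)) hδ (by
      rw [Finset.prod_mul_distrib, two_mul, pow_add]
      exact mul_le_mul hs' ht' (Finset.prod_nonneg fun j _ => abs_nonneg _) (by positivity))
  set u := |s - t| with hu
  have hu0 : 0 ≤ u := abs_nonneg _
  have hκ : (0 : ℝ) < 16 * δ ^ 2 := by positivity
  have hsq : √(16 * δ ^ 2) = 4 * δ := by
    rw [show 16 * δ ^ 2 = (4 * δ) ^ 2 by ring]; exact Real.sqrt_sq (by positivity)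
  have h2 : ∀ j, u / √(|s - x j| * |t - x j|) ≤ truncKernel (16 * δ ^ 2) (x j) s t
      + truncKernel (16 * δ ^ 2) (x j) t s + u / (2 * δ) := by
    intro j
    have e1 := sqrt_div_le_truncKernel_add (s := s) hκ (ht j)
    have e2 := sqrt_div_le_truncKernel_add (s := t) hκ (hs j)
    rw [hsq] at e1 e2
    rw [abs_sub_comm t s] at e2
    have e3 : u / √(|s - x j| * |t - x j|) ≤ √(u / |s - x j|) + √(u / |t - x j|) := by
      have hh : u ≤ |s - x j| + |t - x j| := by
        rw [abs_sub_comm t]; exact abs_sub_le _ _ _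
      have e4 : u / √(|s - x j| * |t - x j|) ≤ √(u / |s - x j| + u / |t - x j|) := by
        apply Real.le_sqrt_of_sq_le
        rw [div_pow, Real.sq_sqrt (by positivity), div_add_div _ _ (ha j).ne' (hb j).ne']
        gcongr
        nlinarith
      refine e4.trans ?_
      apply Real.sqrt_le_iff.2 ⟨by positivity, ?_⟩
      rw [add_sq, Real.sq_sqrt (by positivity), Real.sq_sqrt (by positivity)]
      have : 0 ≤ 2 * √(u / |s - x j|) * √(u / |t - x j|) := by positivity
      linarith
    have e5 : u / (4 * δ) + u / (4 * δ) = u / (2 * δ) := by field_simp; ring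
    linarith
  have h3 : u ≤ (1 / (N : ℝ)) * ∑ j, δ * (truncKernel (16 * δ ^ 2) (x j) s t
      + truncKernel (16 * δ ^ 2) (x j) t s + u / (2 * δ)) := by
    calc u = u * 1 := by ring
      _ ≤ u * ((1 / (N : ℝ)) * ∑ j, δ / √(|s - x j| * |t - x j|)) := by gcongr
      _ = (1 / (N : ℝ)) * ∑ j, δ * (u / √(|s - x j| * |t - x j|)) := by
        rw [mul_left_comm, Finset.mul_sum]
        congr 1; apply Finset.sum_congr rfl; intros; ring
      _ ≤ _ := by
        gcongr with j
        exact h2 j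
  have h4 : ∀ j, δ * (truncKernel (16 * δ ^ 2) (x j) s t
      + truncKernel (16 * δ ^ 2) (x j) t s + u / (2 * δ)) =
      δ * (truncKernel (16 * δ ^ 2) (x j) s t + truncKernel (16 * δ ^ 2) (x j) t s) + u / 2 := by
    intro j; field_simp
  simp_rw [h4] at h3
  rw [Finset.sum_add_distrib, mul_add] at h3
  have h5 : (1 / (N : ℝ)) * ∑ j : Fin N, u / 2 = u / 2 := by
    simp; field_simp
  rw [h5] at h3
  calc u ≤ 2 * ((1 / (N : ℝ)) * ∑ j, δ * (truncKernel (16 * δ ^ 2) (x j) s t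
      + truncKernel (16 * δ ^ 2) (x j) t s)) := by linarith
    _ = _ := by
      rw [Finset.mul_sum, Finset.mul_sum]
      apply Finset.sum_congr rfl; intros; ring

lemma lintegral_inv_sqrt_indicator {a : ℝ} (ha : 0 < a) :
    ∫⁻ v : ℝ, ENNReal.ofReal (if |v| < a then (√|v|)⁻¹ else 0) ≤ ENNReal.ofReal (4 * √a) := by
  set g : ℝ → ENNReal := (Set.Ioc 0 a).indicator fun v => ENNReal.ofReal (v ^ (-(1 / 2) : ℝ)) with hg
  have hgm : Measurable g := Measurable.indicator (by fun_prop) measurableSet_Ioc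
  have h1 : ∀ v : ℝ, ENNReal.ofReal (if |v| < a then (√|v|)⁻¹ else 0) ≤ g v + g (-v) := by
    intro v
    by_cases hv : |v| < a
    · rcases lt_trichotomy v 0 with h | h | h
      · refine le_trans ?_ le_add_self
        rw [hg, Set.indicator_of_mem (by rw [abs_of_neg h] at hv; exact ⟨by linarith, hv.le⟩)]
        rw [if_pos hv, abs_of_neg h, Real.rpow_neg (by linarith), Real.sqrt_eq_rpow]
      · simp [h, ha]
      · refine le_trans ?_ le_self_add
        rw [hg, Set.indicator_of_mem (by rw [abs_of_pos h] at hv; exact ⟨by linarith, hv.le⟩)]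
        rw [if_pos hv, abs_of_pos h, Real.rpow_neg (by linarith), Real.sqrt_eq_rpow]
    · simp [hv]
  refine (lintegral_mono h1).trans ?_
  rw [lintegral_add_left hgm, lintegral_neg_eq_self]
  have h2 : ∫⁻ v, g v = ENNReal.ofReal (2 * √a) := by
    rw [hg, lintegral_indicator measurableSet_Ioc, ← ofReal_integral_eq_lintegral_ofReal]
    · rw [← intervalIntegral.integral_of_le ha.le, integral_rpow (by norm_num)]
      congr 1
      rw [Real.sqrt_eq_rpow, Real.zero_rpow (by norm_num)]
      norm_num
      ring
    · have := intervalIntegral.intervalIntegrable_rpow' (a := 0) (b := a)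
        (r := (-(1 / 2) : ℝ)) (by norm_num)
      rwa [intervalIntegrable_iff_integrableOn_Ioc_of_le ha.le] at this
    · refine (ae_restrict_iff' measurableSet_Ioc).2 (.of_forall fun v hv => ?_)
      exact Real.rpow_nonneg hv.1.le _
  rw [h2, ← ENNReal.ofReal_add (by positivity) (by positivity)]
  apply le_of_eq; congr 1; ring

lemma truncKernel_le {κ : ℝ} (hκ : 0 < κ) (x s t : ℝ) :
    truncKernel κ x s t ≤ (if |t - s| ≤ √(2 * κ) then √2 else 0) +
      √(2 * |s - x|) * (if |t - x| < 3 * κ / (2 * |s - x|) then (√|t - x|)⁻¹ else 0) := by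
  have n1 : 0 ≤ (if |t - s| ≤ √(2 * κ) then √2 else 0) := by split_ifs <;> positivity
  have n2 : 0 ≤ √(2 * |s - x|) * (if |t - x| < 3 * κ / (2 * |s - x|) then (√|t - x|)⁻¹ else 0) := by
    split_ifs <;> positivity
  unfold truncKernel
  by_cases h : |s - t| * |t - x| < κ
  swap
  · rw [if_neg h]; exact add_nonneg n1 n2
  rw [if_pos h]
  rcases eq_or_ne t x with rfl | htx
  · rw [sub_self, abs_zero, div_zero, Real.sqrt_zero]
    simpa using add_nonneg n1 n2
  have hv : 0 < |t - x| := abs_pos.2 (sub_ne_zero.2 htx)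
  by_cases hc : |s - t| ≤ 2 * |t - x|
  · have h1 : |t - s| ≤ √(2 * κ) := by
      rw [abs_sub_comm]
      apply Real.le_sqrt_of_sq_le
      nlinarith [abs_nonneg (s - t)]
    rw [if_pos h1]
    have : √(|s - t| / |t - x|) ≤ √2 := by
      apply Real.sqrt_le_sqrt
      rw [div_le_iff₀ hv]; exact hc
    linarith
  · push Not at hc
    have t1 : |s - t| ≤ |s - x| + |t - x| := by
      rw [abs_sub_comm t]; exact abs_sub_le _ _ _
    have t2 : |s - x| ≤ |s - t| + |t - x| := abs_sub_le _ _ _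
    have hz : 0 < |s - x| := by linarith
    have h2 : |t - x| < 3 * κ / (2 * |s - x|) := by
      rw [lt_div_iff₀ (by positivity)]
      nlinarith
    rw [if_pos h2]
    have : √(|s - t| / |t - x|) ≤ √(2 * |s - x|) * (√|t - x|)⁻¹ := by
      rw [← Real.sqrt_inv, ← Real.sqrt_mul (by positivity), ← div_eq_mul_inv]
      apply Real.sqrt_le_sqrt
      gcongr
      linarith
    linarith

lemma lintegral_truncKernel_le {κ : ℝ} (hκ : 0 < κ) (x s : ℝ) :
    ∫⁻ t, ENNReal.ofReal (truncKernel κ x s t) ≤ ENNReal.ofReal (11 * √κ) := by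
  have h1 : ∀ t, ENNReal.ofReal (truncKernel κ x s t) ≤
      (Set.Icc (s - √(2 * κ)) (s + √(2 * κ))).indicator (fun _ => ENNReal.ofReal √2) t +
      ENNReal.ofReal √(2 * |s - x|) *
        ENNReal.ofReal (if |t - x| < 3 * κ / (2 * |s - x|) then (√|t - x|)⁻¹ else 0) := by
    intro t
    refine (ENNReal.ofReal_le_ofReal (truncKernel_le hκ x s t)).trans ?_
    refine ENNReal.ofReal_add_le.trans ?_
    rw [ENNReal.ofReal_mul (Real.sqrt_nonneg _)]
    gcongr
    by_cases h : |t - s| ≤ √(2 * κ)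
    · rw [Set.indicator_of_mem]
      · rw [if_pos h]
      · have := abs_le.1 h; constructor <;> linarith
    · rw [if_neg h]; simp
  refine (lintegral_mono h1).trans ?_
  rw [lintegral_add_left (Measurable.indicator (by fun_prop) measurableSet_Icc)]
  rw [lintegral_indicator measurableSet_Icc, setLIntegral_const, Real.volume_Icc,
    lintegral_const_mul' _ _ ENNReal.ofReal_ne_top,
    lintegral_sub_right_eq_self (fun t => ENNReal.ofReal
      (if |t| < 3 * κ / (2 * |s - x|) then (√|t|)⁻¹ else 0)) x]
  have h2 : ENNReal.ofReal √(2 * |s - x|) *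
      ∫⁻ t : ℝ, ENNReal.ofReal (if |t| < 3 * κ / (2 * |s - x|) then (√|t|)⁻¹ else 0) ≤
      ENNReal.ofReal (7 * √κ) := by
    rcases eq_or_ne s x with rfl | hsx
    · simp
    have hz : 0 < |s - x| := abs_pos.2 (sub_ne_zero.2 hsx)
    refine (mul_le_mul_right (lintegral_inv_sqrt_indicator (by positivity)) _).trans ?_
    rw [← ENNReal.ofReal_mul (by positivity)]
    apply ENNReal.ofReal_le_ofReal
    rw [mul_left_comm, ← Real.sqrt_mul (by positivity), mul_div_cancel₀ _ (by positivity),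
      Real.sqrt_mul (by norm_num), ← mul_assoc]
    gcongr
    have : √3 ≤ 7 / 4 := Real.sqrt_le_iff.2 (by norm_num)
    linarith
  refine (add_le_add_right h2 _).trans ?_
  rw [← ENNReal.ofReal_mul (by positivity), ← ENNReal.ofReal_add (by ring_nf; positivity) (by positivity)]
  apply ENNReal.ofReal_le_ofReal
  rw [Real.sqrt_mul (by norm_num)]
  have := Real.mul_self_sqrt (show (0:ℝ) ≤ 2 by norm_num)
  apply le_of_eq
  linear_combination (2 * √κ) * this

/-- A set on which a product of `N` linear factors is at most `δ ^ N` is small, in the sense of the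
average distance of two of its points. -/
lemma lintegral_abs_sub_le_of_prod_le {N : ℕ} (hN : 0 < N) (x : Fin N → ℝ) {δ : ℝ} (hδ : 0 < δ)
    {E : Set ℝ} (hE : MeasurableSet E) (h : ∀ s ∈ E, ∏ j, |s - x j| ≤ δ ^ N) :
    ∫⁻ s in E, ∫⁻ t in E, ENNReal.ofReal |s - t| ≤ ENNReal.ofReal (176 * δ ^ 2) * volume E := by
  have hN' : (0 : ℝ) < N := by exact_mod_cast hN
  set κ := 16 * δ ^ 2 with hκ_def
  have hκ : (0 : ℝ) < κ := by positivity
  have hsq : √κ = 4 * δ := by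
    rw [hκ_def, show 16 * δ ^ 2 = (4 * δ) ^ 2 by ring]; exact Real.sqrt_sq (by positivity)
  have hnull : ∀ᵐ s ∂(volume.restrict E), s ∈ E ∧ ∀ j, s ≠ x j := by
    filter_upwards [ae_restrict_mem hE, ae_restrict_of_ae
      (ae_all_iff.2 fun j => (Set.finite_singleton (x j)).measure_zero volume |> compl_mem_ae_iff.2)]
      with s hs hj
    exact ⟨hs, fun j => by simpa using hj j⟩
  have hm : ∀ j, Measurable fun z : ℝ × ℝ => ENNReal.ofReal (truncKernel κ (x j) z.1 z.2) :=
    fun j => by fun_prop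
  have hm' : ∀ j, Measurable fun z : ℝ × ℝ => ENNReal.ofReal (truncKernel κ (x j) z.2 z.1) :=
    fun j => (hm j).comp measurable_swap
  have hI : ∀ j, ∫⁻ s in E, ∫⁻ t in E, ENNReal.ofReal (truncKernel κ (x j) s t) ≤
      ENNReal.ofReal (44 * δ) * volume E := by
    intro j
    calc _ ≤ ∫⁻ s in E, ENNReal.ofReal (44 * δ) := by
          apply lintegral_mono; intro s
          refine (setLIntegral_le_lintegral _ _).trans ((lintegral_truncKernel_le hκ _ _).trans ?_)
          rw [hsq]; apply ENNReal.ofReal_le_ofReal; linarith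
      _ = _ := by simp
  have hI' : ∀ j, ∫⁻ s in E, ∫⁻ t in E, ENNReal.ofReal (truncKernel κ (x j) t s) ≤
      ENNReal.ofReal (44 * δ) * volume E := by
    intro j
    rw [lintegral_lintegral_swap (hm' j).aemeasurable]
    exact hI j
  calc ∫⁻ s in E, ∫⁻ t in E, ENNReal.ofReal |s - t|
      ≤ ∫⁻ s in E, ∫⁻ t in E, ∑ j, ENNReal.ofReal (2 * δ / N) *
        (ENNReal.ofReal (truncKernel κ (x j) s t) + ENNReal.ofReal (truncKernel κ (x j) t s)) := by
        refine lintegral_mono_ae ?_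
        filter_upwards [hnull] with s hs
        refine lintegral_mono_ae ?_
        filter_upwards [hnull] with t ht
        refine (ENNReal.ofReal_le_ofReal (abs_sub_le_sum_truncKernel hN hδ hs.2 ht.2
          (h s hs.1) (h t ht.1))).trans ?_
        rw [ENNReal.ofReal_sum_of_nonneg]
        · apply Finset.sum_le_sum
          intro j _
          rw [ENNReal.ofReal_mul (by positivity),
            ENNReal.ofReal_add (truncKernel_nonneg _ _ _ _) (truncKernel_nonneg _ _ _ _)]
        · intro j _
          have := truncKernel_nonneg κ (x j) s t
          have := truncKernel_nonneg κ (x j) t s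
          positivity
    _ = ∑ j, ENNReal.ofReal (2 * δ / N) *
        ((∫⁻ s in E, ∫⁻ t in E, ENNReal.ofReal (truncKernel κ (x j) s t)) +
          ∫⁻ s in E, ∫⁻ t in E, ENNReal.ofReal (truncKernel κ (x j) t s)) := by
        have e1 : ∀ s, ∫⁻ t in E, ∑ j, ENNReal.ofReal (2 * δ / N) *
            (ENNReal.ofReal (truncKernel κ (x j) s t) + ENNReal.ofReal (truncKernel κ (x j) t s)) =
            ∑ j, ENNReal.ofReal (2 * δ / N) *
            ((∫⁻ t in E, ENNReal.ofReal (truncKernel κ (x j) s t)) +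
              ∫⁻ t in E, ENNReal.ofReal (truncKernel κ (x j) t s)) := by
          intro s
          have f1 : ∀ j, Measurable fun t => ENNReal.ofReal (truncKernel κ (x j) s t) :=
            fun j => (hm j).comp measurable_prodMk_left
          have f2 : ∀ j, Measurable fun t => ENNReal.ofReal (truncKernel κ (x j) t s) :=
            fun j => (hm' j).comp measurable_prodMk_left
          have f3 : ∀ j, Measurable fun t => ENNReal.ofReal (2 * δ / N) *
            (ENNReal.ofReal (truncKernel κ (x j) s t) + ENNReal.ofReal (truncKernel κ (x j) t s)) :=
            fun j => ((f1 j).add (f2 j)).const_mul _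
          rw [lintegral_finsetSum _ (fun j _ => f3 j)]
          refine Finset.sum_congr rfl fun j _ => ?_
          rw [lintegral_const_mul' _ _ ENNReal.ofReal_ne_top, lintegral_add_left (f1 j)]
        simp_rw [e1]
        have g1 : ∀ j, Measurable fun s => ∫⁻ t in E, ENNReal.ofReal (truncKernel κ (x j) s t) :=
          fun j => (hm j).lintegral_prod_right'
        have g2 : ∀ j, Measurable fun s => ∫⁻ t in E, ENNReal.ofReal (truncKernel κ (x j) t s) :=
          fun j => (hm' j).lintegral_prod_right'
        have g3 : ∀ j, Measurable fun s => ENNReal.ofReal (2 * δ / N) *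
            ((∫⁻ t in E, ENNReal.ofReal (truncKernel κ (x j) s t)) +
              ∫⁻ t in E, ENNReal.ofReal (truncKernel κ (x j) t s)) :=
            fun j => ((g1 j).add (g2 j)).const_mul _
        rw [lintegral_finsetSum _ (fun j _ => g3 j)]
        refine Finset.sum_congr rfl fun j _ => ?_
        rw [lintegral_const_mul' _ _ ENNReal.ofReal_ne_top, lintegral_add_left (g1 j)]
    _ ≤ ∑ j : Fin N, ENNReal.ofReal (2 * δ / N) *
        (ENNReal.ofReal (44 * δ) * volume E + ENNReal.ofReal (44 * δ) * volume E) := by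
        gcongr with j
        · exact hI j
        · exact hI' j
    _ = _ := by
        rw [Finset.sum_const, Finset.card_univ, Fintype.card_fin, ← add_mul,
          ← ENNReal.ofReal_add (by positivity) (by positivity), ← mul_assoc,
          ← ENNReal.ofReal_mul (by positivity), nsmul_eq_mul, ← mul_assoc,
          ← ENNReal.ofReal_natCast, ← ENNReal.ofReal_mul (by positivity)]
        congr 2; field_simp; ring

/-- The sublevel set `{|R| ≤ c * δ ^ N}` of a real polynomial of degree `N` and leading coefficient
`c` is small, in the sense of the average distance of two of its points. -/
lemma lintegral_abs_sub_le_of_polynomial {N : ℕ} (hN : 0 < N) {R : Polynomial ℝ}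
    (hR : R.natDegree ≤ N) (hc : 0 < R.coeff N) {δ : ℝ} (hδ : 0 < δ)
    {E : Set ℝ} (hE : MeasurableSet E) (h : ∀ s ∈ E, |R.eval s| ≤ R.coeff N * δ ^ N) :
    ∫⁻ s in E, ∫⁻ t in E, ENNReal.ofReal |s - t| ≤ ENNReal.ofReal (176 * δ ^ 2) * volume E := by
  have hdeg : R.natDegree = N :=
    le_antisymm hR (Polynomial.le_natDegree_of_ne_zero hc.ne')
  set Q := R.map Complex.ofRealHom with hQ
  have hQdeg : Q.natDegree = N := by rw [hQ, Polynomial.natDegree_map, hdeg]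
  have hsp : Q.Splits := IsAlgClosed.splits Q
  have hcard : Q.roots.toList.length = N := by
    rw [Multiset.length_toList, ← hQdeg, hsp.natDegree_eq_card_roots]
  have hprod : ∀ f : ℂ → ℂ, (Q.roots.map f).prod = ∏ j, f (Q.roots.toList.get j) := by
    intro f
    conv_lhs => rw [← Multiset.coe_toList Q.roots, Multiset.map_coe, Multiset.prod_coe]
    rw [← List.prod_ofFn]
    congr 1
    conv_lhs => rw [← List.ofFn_get Q.roots.toList, List.map_ofFn]
    rfl
  have heval : ∀ s : ℝ, |R.eval s| = R.coeff N * ∏ j, ‖(s : ℂ) - Q.roots.toList.get j‖ := by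
    intro s
    have e1 : ((R.eval s : ℝ) : ℂ) = Q.eval (s : ℂ) := by
      rw [hQ]; simpa using (Polynomial.eval_map_apply (f := Complex.ofRealHom) (p := R) s).symm
    have e2 : Q.leadingCoeff = (R.coeff N : ℂ) := by
      rw [hQ, Polynomial.leadingCoeff_map, Polynomial.leadingCoeff, hdeg]; rfl
    rw [← Real.norm_eq_abs, ← Complex.norm_real, e1, hsp.eval_eq_prod_roots, norm_mul, e2,
      Complex.norm_real, Real.norm_of_nonneg hc.le, hprod, norm_prod]
  have hle : ∀ s ∈ E, ∏ j, |s - (Q.roots.toList.get j).re| ≤ δ ^ N := by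
    intro s hs
    have h1 := h s hs
    rw [heval s, mul_le_mul_iff_right₀ hc] at h1
    refine le_trans (Finset.prod_le_prod (fun _ _ => abs_nonneg _) fun j _ => ?_) h1
    simpa using Complex.abs_re_le_norm ((s : ℂ) - Q.roots.toList.get j)
  revert hle
  generalize Q.roots.toList.get = z
  subst hcard
  intro hle
  exact lintegral_abs_sub_le_of_prod_le hN (fun j => (z j).re) hδ hE hle

lemma lintegral_comp_mul_right_add (F : ℝ → ENNReal) (y : ℝ) {r : ℝ} (hr : r ≠ 0) :
    ∫⁻ z, F z = ENNReal.ofReal |r| * ∫⁻ m, F (y + m * r) := by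
  rw [← lintegral_add_left_eq_self F y]
  have h := Real.smul_map_volume_mul_right hr
  conv_lhs => rw [← h]
  rw [lintegral_smul_measure, smul_eq_mul]
  congr 1
  exact lintegral_map_equiv (fun z => F (y + z)) (Homeomorph.mulRight₀ r hr).toMeasurableEquiv

lemma lintegral_mul_lintegral_eq_lines {f : ℝ × ℝ → ENNReal} (hf : Measurable f) {s t : ℝ}
    (hst : s ≠ t) :
    (∫⁻ y, f (s, y)) * ∫⁻ y, f (t, y) =
      ∫⁻ m, ∫⁻ c, ENNReal.ofReal |s - t| * (f (s, c + m * s) * f (t, c + m * t)) := by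
  have hne : t - s ≠ 0 := sub_ne_zero.2 hst.symm
  calc (∫⁻ y, f (s, y)) * ∫⁻ y, f (t, y)
      = ∫⁻ y, f (s, y) * ∫⁻ z, f (t, z) := by
        rw [lintegral_mul_const _ (by fun_prop)]
    _ = ∫⁻ y, ∫⁻ m, ENNReal.ofReal |s - t| * (f (s, y) * f (t, y + m * (t - s))) := by
        refine lintegral_congr fun y => ?_
        rw [lintegral_comp_mul_right_add (fun z => f (t, z)) y hne, abs_sub_comm,
          lintegral_const_mul' _ _ ENNReal.ofReal_ne_top, lintegral_const_mul _ (by fun_prop)]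
        ring
    _ = ∫⁻ m, ∫⁻ y, ENNReal.ofReal |s - t| * (f (s, y) * f (t, y + m * (t - s))) :=
        lintegral_lintegral_swap (by fun_prop)
    _ = _ := by
        refine lintegral_congr fun m => ?_
        rw [← lintegral_add_right_eq_self _ (m * s)]
        refine lintegral_congr fun c => ?_
        congr 4
        ring

/-- If all the intersections of a planar set with the non-vertical lines are small, in the sense of
the average distance of two points, then the set has small area. -/
lemma volume_le_of_forall_line {A : Set (ℝ × ℝ)} (hA : MeasurableSet A) (hfin : volume A ≠ ⊤)
    {K : ℝ} (hK : 0 ≤ K)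
    (h : ∀ m c : ℝ, ∫⁻ s in {s | (s, c + m * s) ∈ A}, ∫⁻ t in {s | (s, c + m * s) ∈ A},
      ENNReal.ofReal |s - t| ≤ ENNReal.ofReal (K / (1 + m ^ 2)) * volume {s | (s, c + m * s) ∈ A}) :
    volume A ≤ ENNReal.ofReal (K * Real.pi) := by
  set f : ℝ × ℝ → ENNReal := A.indicator 1 with hf_def
  have hf : Measurable f := measurable_one.indicator hA
  have hm : ∀ m c : ℝ, MeasurableSet {s : ℝ | (s, c + m * s) ∈ A} := fun m c =>
    (show Measurable fun s : ℝ => (s, c + m * s) by fun_prop) hA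
  have harea : volume A = ∫⁻ s, ∫⁻ y, f (s, y) := by
    rw [← lintegral_indicator_one hA, Measure.volume_eq_prod, lintegral_prod _ hf.aemeasurable]
  have hslice : ∀ m c s, f (s, c + m * s) = {s : ℝ | (s, c + m * s) ∈ A}.indicator 1 s := by
    intro m c s; rfl
  have hsq : volume A * volume A ≤ ENNReal.ofReal (K * Real.pi) * volume A := calc
    volume A * volume A
      = ∫⁻ s, ∫⁻ t, (∫⁻ y, f (s, y)) * ∫⁻ y, f (t, y) := by
        have : Measurable fun s => ∫⁻ y, f (s, y) := hf.lintegral_prod_right'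
        conv_lhs => rw [harea]
        simp_rw [lintegral_const_mul _ this]
        rw [lintegral_mul_const _ this]
    _ = ∫⁻ s, ∫⁻ t, ∫⁻ m, ∫⁻ c,
          ENNReal.ofReal |s - t| * (f (s, c + m * s) * f (t, c + m * t)) := by
        refine lintegral_congr fun s => lintegral_congr_ae ?_
        filter_upwards [compl_mem_ae_iff.2 ((Set.finite_singleton s).measure_zero volume)]
          with t ht
        exact lintegral_mul_lintegral_eq_lines hf (Ne.symm (by simpa using ht))
    _ = ∫⁻ p : ℝ × ℝ, ∫⁻ q : ℝ × ℝ, ENNReal.ofReal |p.1 - p.2| *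
          (f (p.1, q.2 + q.1 * p.1) * f (p.2, q.2 + q.1 * p.2)) := by
        have hG : Measurable fun z : (ℝ × ℝ) × (ℝ × ℝ) => ENNReal.ofReal |z.1.1 - z.1.2| *
          (f (z.1.1, z.2.2 + z.2.1 * z.1.1) * f (z.1.2, z.2.2 + z.2.1 * z.1.2)) := by fun_prop
        rw [Measure.volume_eq_prod, lintegral_prod _ hG.lintegral_prod_right'.aemeasurable]
        refine lintegral_congr fun s => lintegral_congr fun t => ?_
        rw [lintegral_prod]
        fun_prop
    _ = ∫⁻ q : ℝ × ℝ, ∫⁻ p : ℝ × ℝ, ENNReal.ofReal |p.1 - p.2| *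
          (f (p.1, q.2 + q.1 * p.1) * f (p.2, q.2 + q.1 * p.2)) :=
        lintegral_lintegral_swap (by fun_prop)
    _ = ∫⁻ m, ∫⁻ c, ∫⁻ s, ∫⁻ t,
          ENNReal.ofReal |s - t| * (f (s, c + m * s) * f (t, c + m * t)) := by
        have hG : Measurable fun z : (ℝ × ℝ) × (ℝ × ℝ) => ENNReal.ofReal |z.2.1 - z.2.2| *
          (f (z.2.1, z.1.2 + z.1.1 * z.2.1) * f (z.2.2, z.1.2 + z.1.1 * z.2.2)) := by fun_prop
        rw [Measure.volume_eq_prod, lintegral_prod _ hG.lintegral_prod_right'.aemeasurable]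
        refine lintegral_congr fun s => lintegral_congr fun t => ?_
        rw [lintegral_prod]
        fun_prop
    _ ≤ ∫⁻ m, ∫⁻ c, ENNReal.ofReal (K / (1 + m ^ 2)) * ∫⁻ s, f (s, c + m * s) := by
        refine lintegral_mono fun m => lintegral_mono fun c => ?_
        have e1 : ∫⁻ s, f (s, c + m * s) = volume {s : ℝ | (s, c + m * s) ∈ A} := by
          simp_rw [hslice]
          exact lintegral_indicator_one (hm m c)
        dsimp only
        rw [e1]
        refine le_trans (le_of_eq ?_) (h m c)
        rw [← lintegral_indicator (hm m c)]
        refine lintegral_congr fun s => ?_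
        by_cases hs : s ∈ {s : ℝ | (s, c + m * s) ∈ A}
        · rw [Set.indicator_of_mem hs, ← lintegral_indicator (hm m c)]
          refine lintegral_congr fun t => ?_
          rw [hslice, hslice, Set.indicator_of_mem hs]
          by_cases ht : t ∈ {s : ℝ | (s, c + m * s) ∈ A}
          · rw [Set.indicator_of_mem ht, Set.indicator_of_mem ht]; simp
          · rw [Set.indicator_of_notMem ht, Set.indicator_of_notMem ht]; simp
        · rw [Set.indicator_of_notMem hs]
          simp [hslice, Set.indicator_of_notMem hs]
    _ = ∫⁻ m, ENNReal.ofReal (K / (1 + m ^ 2)) * volume A := by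
        refine lintegral_congr fun m => ?_
        rw [lintegral_const_mul' _ _ ENNReal.ofReal_ne_top, harea,
          lintegral_lintegral_swap (f := fun c s => f (s, c + m * s)) (by fun_prop)]
        congr 1
        refine lintegral_congr fun s => ?_
        exact lintegral_add_right_eq_self (fun c => f (s, c)) (m * s)
    _ = ENNReal.ofReal (K * Real.pi) * volume A := by
        rw [lintegral_mul_const _ (by fun_prop), ← ofReal_integral_eq_lintegral_ofReal]
        · simp_rw [div_eq_mul_inv]
          rw [integral_const_mul, integral_univ_inv_one_add_sq]
        · simp_rw [div_eq_mul_inv]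
          exact integrable_inv_one_add_sq.const_mul K
        · exact .of_forall fun m => by positivity
  rcases eq_or_ne (volume A) 0 with h0 | h0
  · simp [h0]
  · exact (ENNReal.mul_le_mul_iff_left h0 hfin).1 hsq

/-- A Nikolskii-type bound: the value of a nonnegative polynomial at the centre of an interval is at
most its degree times its mean, up to a constant. -/
lemma eval_zero_le_integral {d : ℕ} {r : Polynomial ℝ} (hr : r.natDegree ≤ d)
    (hpos : ∀ x ∈ Set.Icc (-(1 / 2) : ℝ) (1 / 2), 0 ≤ r.eval x) :
    r.eval 0 ≤ (2 * d + 3) * ∫ x in (-(1 / 2) : ℝ)..(1 / 2), r.eval x := by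
  set P : Polynomial ℝ := r.comp (Polynomial.C (1 / 2) * Polynomial.X) * (1 - Polynomial.X ^ 2)
    with hP
  have hPe : ∀ x, P.eval x = r.eval (x / 2) * (1 - x ^ 2) := by
    intro x; simp [hP, div_eq_inv_mul]
  have hn : 2 * d + 3 ≠ 0 := by omega
  have hdeg : P.degree < ((2 * (2 * d + 3) : ℕ) : WithBot ℕ) := by
    refine lt_of_le_of_lt Polynomial.degree_le_natDegree ?_
    norm_cast
    have e1 : P.natDegree ≤ d * 1 + 2 := by
      refine Polynomial.natDegree_mul_le.trans (add_le_add ?_ ?_)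
      · refine Polynomial.natDegree_comp_le.trans (Nat.mul_le_mul hr ?_)
        compute_degree
      · compute_degree
    omega
  have hpos' : ∀ x ∈ Set.Icc (-1 : ℝ) 1, 0 ≤ r.eval (x / 2) := fun x hx =>
    hpos _ ⟨by linarith [hx.1], by linarith [hx.2]⟩
  have key := Polynomial.Chebyshev.integral_eq_sumZeroes hn (by exact_mod_cast hdeg)
  rw [Polynomial.Chebyshev.integral_measureT, Polynomial.Chebyshev.sumZeroes] at key
  have h1 : r.eval 0 ≤ ∑ i ∈ Finset.range (2 * d + 3),
      P.eval (Real.cos ((2 * i + 1) / (2 * ((2 * d + 3 : ℕ) : ℝ)) * Real.pi)) := by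
    have e2 : P.eval (Real.cos ((2 * ((d + 1 : ℕ) : ℝ) + 1) / (2 * ((2 * d + 3 : ℕ) : ℝ)) * Real.pi))
        = r.eval 0 := by
      have : (2 * ((d + 1 : ℕ) : ℝ) + 1) / (2 * ((2 * d + 3 : ℕ) : ℝ)) * Real.pi = Real.pi / 2 := by
        push_cast; field_simp; ring
      rw [this, Real.cos_pi_div_two, hPe]; simp
    rw [← e2]
    refine Finset.single_le_sum (f := fun i : ℕ =>
      P.eval (Real.cos ((2 * (i : ℝ) + 1) / (2 * ((2 * d + 3 : ℕ) : ℝ)) * Real.pi)))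
      (fun i _ => ?_) (Finset.mem_range.2 (by omega))
    rw [hPe]
    exact mul_nonneg (hpos' _ ⟨Real.neg_one_le_cos _, Real.cos_le_one _⟩)
      (by nlinarith [Real.neg_one_le_cos ((2 * (i : ℝ) + 1) / (2 * ((2 * d + 3 : ℕ) : ℝ)) * Real.pi),
        Real.cos_le_one ((2 * (i : ℝ) + 1) / (2 * ((2 * d + 3 : ℕ) : ℝ)) * Real.pi)])
  have h2 : ∫ x in (-1 : ℝ)..1, P.eval x * √(1 - x ^ 2)⁻¹ ≤ ∫ x in (-1 : ℝ)..1, r.eval (x / 2) := by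
    have hcont : Continuous fun x : ℝ => r.eval (x / 2) := by fun_prop
    refine intervalIntegral.integral_mono_on (by norm_num) ?_ (hcont.intervalIntegrable _ _) ?_
    · exact Polynomial.Chebyshev.intervalIntegrable_sqrt_one_sub_sq_inv.continuousOn_mul
        (Polynomial.continuous _).continuousOn
    · intro x hx
      rw [hPe, mul_assoc]
      refine mul_le_of_le_one_right (hpos' x hx) ?_
      have hx2 : 0 ≤ 1 - x ^ 2 := by nlinarith [hx.1, hx.2]
      rw [Real.sqrt_inv]
      rcases hx2.eq_or_lt with h0 | h0
      · simp [← h0]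
      · rw [mul_inv_le_iff₀ (Real.sqrt_pos.2 h0), one_mul]
        apply Real.le_sqrt_of_sq_le
        nlinarith [sq_nonneg x]
  rw [intervalIntegral.integral_comp_div (fun x => r.eval x) (by norm_num : (2 : ℝ) ≠ 0)] at h2
  rw [key, smul_eq_mul] at h2
  have h3 : (-1 : ℝ) / 2 = -(1 / 2) := by norm_num
  rw [h3] at h2
  set J := ∫ x in (-(1 / 2) : ℝ)..(1 / 2), r.eval x
  set S := ∑ i ∈ Finset.range (2 * d + 3),
      P.eval (Real.cos ((2 * i + 1) / (2 * ((2 * d + 3 : ℕ) : ℝ)) * Real.pi))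
  have hnpos : (0 : ℝ) < ((2 * d + 3 : ℕ) : ℝ) := by positivity
  have h4 : Real.pi * S ≤ 2 * J * ((2 * d + 3 : ℕ) : ℝ) := by
    have := mul_le_mul_of_nonneg_right h2 hnpos.le
    calc Real.pi * S = Real.pi / ((2 * d + 3 : ℕ) : ℝ) * S * ((2 * d + 3 : ℕ) : ℝ) := by field_simp
      _ ≤ _ := this
  have hr0 : 0 ≤ r.eval 0 := hpos 0 (by norm_num)
  push_cast at h4
  nlinarith [Real.pi_gt_three]

/-- Functions on the unit circle of the form `(s, τ) ↦ a(s) + τ * b(s)` for polynomials `a` of degree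
at most `d` and `b` of degree less than `d`. -/
def IsCirclePoly (d : ℕ) (f : ℝ → ℝ → ℝ) : Prop :=
  ∃ a b : Polynomial ℝ, a.natDegree ≤ d ∧ (Polynomial.X * b).natDegree ≤ d ∧
    ∀ s τ : ℝ, s ^ 2 + τ ^ 2 = 1 → f s τ = a.eval s + τ * b.eval s

namespace IsCirclePoly

lemma mono {d e : ℕ} (h : d ≤ e) {f : ℝ → ℝ → ℝ} (hf : IsCirclePoly d f) : IsCirclePoly e f := by
  obtain ⟨a, b, ha, hb, hab⟩ := hf
  exact ⟨a, b, ha.trans h, hb.trans h, hab⟩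

lemma const (c : ℝ) : IsCirclePoly 0 fun _ _ => c :=
  ⟨Polynomial.C c, 0, by simp, by simp, by simp⟩

lemma linear (x y : ℝ) : IsCirclePoly 1 fun s τ => s * x + τ * y :=
  ⟨Polynomial.C x * Polynomial.X, Polynomial.C y, by compute_degree,
    by compute_degree, fun s τ _ => by simp; ring⟩

lemma mul {d e : ℕ} {f g : ℝ → ℝ → ℝ} (hf : IsCirclePoly d f) (hg : IsCirclePoly e g) :
    IsCirclePoly (d + e) fun s τ => f s τ * g s τ := by
  obtain ⟨a, b, ha, hb, hab⟩ := hf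
  obtain ⟨a', b', ha', hb', hab'⟩ := hg
  have hX : ∀ {q : Polynomial ℝ} {m : ℕ}, (Polynomial.X * q).natDegree ≤ m → q.natDegree ≤ m := by
    intro q m h
    rcases eq_or_ne q 0 with rfl | h0
    · simp
    · rw [Polynomial.natDegree_X_mul h0] at h; omega
  refine ⟨a * a' + b * b' - (Polynomial.X * b) * (Polynomial.X * b'), a * b' + a' * b, ?_, ?_, ?_⟩
  · refine (Polynomial.natDegree_sub_le_of_le (Polynomial.natDegree_add_le_of_degree_le ?_ ?_)
      (Polynomial.natDegree_mul_le_of_le hb hb')).trans (max_self _).le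
    · exact Polynomial.natDegree_mul_le_of_le ha ha'
    · exact Polynomial.natDegree_mul_le_of_le (hX hb) (hX hb')
  · rw [show Polynomial.X * (a * b' + a' * b) =
      a * (Polynomial.X * b') + (Polynomial.X * b) * a' by ring]
    exact Polynomial.natDegree_add_le_of_degree_le (Polynomial.natDegree_mul_le_of_le ha hb')
      (Polynomial.natDegree_mul_le_of_le hb ha')
  · intro s τ h
    simp only [hab s τ h, hab' s τ h, Polynomial.eval_add, Polynomial.eval_sub,
      Polynomial.eval_mul, Polynomial.eval_X]
    linear_combination (b.eval s * b'.eval s) * h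

lemma sum {ι : Type*} (S : Finset ι) {d : ℕ} {f : ι → ℝ → ℝ → ℝ}
    (hf : ∀ i ∈ S, IsCirclePoly d (f i)) : IsCirclePoly d fun s τ => ∑ i ∈ S, f i s τ := by
  classical
  induction S using Finset.induction_on with
  | empty => simpa using (const 0).mono (Nat.zero_le d)
  | insert i S hi ih =>
    obtain ⟨a, b, ha, hb, hab⟩ := hf i (Finset.mem_insert_self _ _)
    obtain ⟨a', b', ha', hb', hab'⟩ := ih fun j hj => hf j (Finset.mem_insert_of_mem hj)
    refine ⟨a + a', b + b', Polynomial.natDegree_add_le_of_degree_le ha ha', ?_, fun s τ h => ?_⟩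
    · rw [mul_add]; exact Polynomial.natDegree_add_le_of_degree_le hb hb'
    · simp only [Finset.sum_insert hi, hab s τ h, hab' s τ h, Polynomial.eval_add]
      ring

lemma pow {d : ℕ} {f : ℝ → ℝ → ℝ} (hf : IsCirclePoly d f) (k : ℕ) :
    IsCirclePoly (k * d) fun s τ => f s τ ^ k := by
  induction k with
  | zero => simpa using const 1
  | succ k ih => simpa only [pow_succ, Nat.succ_mul] using ih.mul hf

lemma prod {ι : Type*} (S : Finset ι) {d : ι → ℕ} {f : ι → ℝ → ℝ → ℝ}
    (hf : ∀ i ∈ S, IsCirclePoly (d i) (f i)) :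
    IsCirclePoly (∑ i ∈ S, d i) fun s τ => ∏ i ∈ S, f i s τ := by
  classical
  induction S using Finset.induction_on with
  | empty => simpa using const 1
  | insert i S hi ih =>
    simp only [Finset.prod_insert hi, Finset.sum_insert hi]
    exact (hf i (Finset.mem_insert_self _ _)).mul
      (ih fun j hj => hf j (Finset.mem_insert_of_mem hj))

end IsCirclePoly

lemma sum_le_of_mem_support {n d : ℕ} {p : MvPolynomial (Fin n) ℝ} (hp : p.totalDegree ≤ d)
    {m : Fin n →₀ ℕ} (hm : m ∈ p.support) : ∑ i, m i ≤ d := by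
  have := (le_totalDegree hm).trans hp
  rwa [Finsupp.sum_fintype _ _ (fun _ => rfl)] at this

lemma isCirclePoly_eval {n d : ℕ} {p : MvPolynomial (Fin n) ℝ} (hp : p.totalDegree ≤ d)
    (x y : Fin n → ℝ) : IsCirclePoly d fun s τ => eval (s • x + τ • y) p := by
  simp only [eval_eq']
  refine IsCirclePoly.sum _ fun m hm => ?_
  have h := (IsCirclePoly.const (coeff m p)).mul (IsCirclePoly.prod Finset.univ
    fun i _ => (IsCirclePoly.linear (x i) (y i)).pow (m i))
  refine h.mono ?_
  simpa using sum_le_of_mem_support hp hm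

/-- The value of a nonnegative polynomial at `y` is controlled by its mean over the arcs of the ellipse
through `x` and `y` near `y` and `-y`. -/
lemma ofReal_eval_add_le_lintegral {n d : ℕ} {p : MvPolynomial (Fin n) ℝ} (hp : p.totalDegree ≤ d)
    (hpos : ∀ x, 0 ≤ eval x p) (x y : Fin n → ℝ) :
    ENNReal.ofReal (eval y p) + ENNReal.ofReal (eval (-y) p) ≤ ENNReal.ofReal (2 * d + 3) *
      ∫⁻ s in Set.Ioc (-(1 / 2) : ℝ) (1 / 2), (ENNReal.ofReal (eval (s • x + √(1 - s ^ 2) • y) p) +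
        ENNReal.ofReal (eval (s • x + √(1 - s ^ 2) • (-y)) p)) := by
  obtain ⟨a, b, ha, -, hab⟩ := isCirclePoly_eval hp x y
  dsimp only at hab
  have hs : ∀ s ∈ Set.Icc (-(1 / 2) : ℝ) (1 / 2),
      2 * a.eval s = eval (s • x + √(1 - s ^ 2) • y) p + eval (s • x + √(1 - s ^ 2) • (-y)) p := by
    intro s hs
    have h1 : s ^ 2 + √(1 - s ^ 2) ^ 2 = 1 := by
      rw [Real.sq_sqrt (by nlinarith [hs.1, hs.2])]; ring
    rw [smul_neg, ← neg_smul, hab s _ h1, hab s (-√(1 - s ^ 2)) (by rw [neg_sq]; exact h1)]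
    ring
  have h0 : 2 * a.eval 0 = eval y p + eval (-y) p := by
    simpa using hs 0 (by norm_num)
  have hnn : ∀ s ∈ Set.Icc (-(1 / 2) : ℝ) (1 / 2), 0 ≤ a.eval s := by
    intro s h
    linarith [hs s h, hpos (s • x + √(1 - s ^ 2) • y), hpos (s • x + √(1 - s ^ 2) • (-y))]
  have key := eval_zero_le_integral ha hnn
  rw [← ENNReal.ofReal_add (hpos _) (hpos _), ← h0]
  have hle : (-(1 / 2) : ℝ) ≤ 1 / 2 := by norm_num
  have hi : ∫⁻ s in Set.Ioc (-(1 / 2) : ℝ) (1 / 2), (ENNReal.ofReal (eval (s • x + √(1 - s ^ 2) • y) p) +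
        ENNReal.ofReal (eval (s • x + √(1 - s ^ 2) • (-y)) p)) =
      ENNReal.ofReal (2 * ∫ s in (-(1 / 2) : ℝ)..(1 / 2), a.eval s) := by
    rw [← intervalIntegral.integral_const_mul, intervalIntegral.integral_of_le hle,
      ofReal_integral_eq_lintegral_ofReal]
    · refine setLIntegral_congr_fun measurableSet_Ioc fun s h => ?_
      rw [← ENNReal.ofReal_add (hpos _) (hpos _), hs s (Set.Ioc_subset_Icc_self h)]
    · exact (Continuous.integrableOn_Icc (by fun_prop)).mono_set Set.Ioc_subset_Icc_self
    · refine (ae_restrict_iff' measurableSet_Ioc).2 (.of_forall fun s h => ?_)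
      have := hnn s (Set.Ioc_subset_Icc_self h)
      simpa using this
  rw [hi, ← ENNReal.ofReal_mul (by positivity)]
  apply ENNReal.ofReal_le_ofReal
  linarith

/-- `q` has degree at most `d`, and `c` is its coefficient of degree `d`. -/
def HasTopCoeff (d : ℕ) (q : Polynomial ℝ) (c : ℝ) : Prop :=
  q.natDegree ≤ d ∧ q.coeff d = c

namespace HasTopCoeff

lemma mul {d e : ℕ} {q r : Polynomial ℝ} {a b : ℝ} (hq : HasTopCoeff d q a)
    (hr : HasTopCoeff e r b) : HasTopCoeff (d + e) (q * r) (a * b) :=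
  ⟨Polynomial.natDegree_mul_le_of_le hq.1 hr.1, by
    rw [Polynomial.coeff_mul_add_eq_of_natDegree_le hq.1 hr.1, hq.2, hr.2]⟩

lemma C (a : ℝ) : HasTopCoeff 0 (Polynomial.C a) a := by simp [HasTopCoeff]

lemma pow {d : ℕ} {q : Polynomial ℝ} {a : ℝ} (hq : HasTopCoeff d q a) (k : ℕ) :
    HasTopCoeff (k * d) (q ^ k) (a ^ k) := by
  induction k with
  | zero => simpa using C 1
  | succ k ih => simpa only [pow_succ, Nat.succ_mul] using ih.mul hq

lemma prod {ι : Type*} (S : Finset ι) {d : ι → ℕ} {q : ι → Polynomial ℝ} {a : ι → ℝ}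
    (hf : ∀ i ∈ S, HasTopCoeff (d i) (q i) (a i)) :
    HasTopCoeff (∑ i ∈ S, d i) (∏ i ∈ S, q i) (∏ i ∈ S, a i) := by
  classical
  induction S using Finset.induction_on with
  | empty => simpa using C 1
  | insert i S hi ih =>
    simp only [Finset.prod_insert hi, Finset.sum_insert hi]
    exact (hf i (Finset.mem_insert_self _ _)).mul
      (ih fun j hj => hf j (Finset.mem_insert_of_mem hj))

lemma sum {ι : Type*} (S : Finset ι) {d : ℕ} {q : ι → Polynomial ℝ} {a : ι → ℝ}
    (hf : ∀ i ∈ S, HasTopCoeff d (q i) (a i)) :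
    HasTopCoeff d (∑ i ∈ S, q i) (∑ i ∈ S, a i) :=
  ⟨Polynomial.natDegree_sum_le_of_forall_le _ _ fun i hi => (hf i hi).1, by
    rw [Polynomial.finsetSum_coeff]; exact Finset.sum_congr rfl fun i hi => (hf i hi).2⟩

lemma quadratic (a b c : ℝ) : HasTopCoeff 2
    (Polynomial.C a * Polynomial.X ^ 2 + Polynomial.C b * Polynomial.X + Polynomial.C c) a :=
  ⟨Polynomial.natDegree_quadratic_le, by simp⟩

end HasTopCoeff

/-- The inverse stereographic projection from the plane to the ellipsoid spanned by three vectors. -/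
noncomputable def stereo {n : ℕ} (x y t : Fin n → ℝ) (w : ℝ × ℝ) : Fin n → ℝ :=
  (1 + (w.1 ^ 2 + w.2 ^ 2))⁻¹ •
    ((2 * w.1) • x + (2 * w.2) • y + (w.1 ^ 2 + w.2 ^ 2 - 1) • t)

lemma exists_polynomial_stereo_line {n d : ℕ} {p : MvPolynomial (Fin n) ℝ}
    (hp : p.totalDegree ≤ d) (x y t : Fin n → ℝ) (m c : ℝ) :
    ∃ R : Polynomial ℝ, HasTopCoeff (2 * d) R ((1 + m ^ 2) ^ d * eval t p) ∧
      ∀ s, R.eval s = (1 + (s ^ 2 + (c + m * s) ^ 2)) ^ d * eval (stereo x y t (s, c + m * s)) p := by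
  set L : Polynomial ℝ := Polynomial.C c + Polynomial.C m * Polynomial.X with hL
  set D : Polynomial ℝ := 1 + (Polynomial.X ^ 2 + L ^ 2) with hD
  set Q : Fin n → Polynomial ℝ := fun i => Polynomial.C (2 * x i) * Polynomial.X +
    Polynomial.C (2 * y i) * L + Polynomial.C (t i) * (Polynomial.X ^ 2 + L ^ 2 - 1) with hQ
  have hDe : ∀ s, D.eval s = 1 + (s ^ 2 + (c + m * s) ^ 2) := by intro s; simp [hD, hL]
  have hD0 : ∀ s, D.eval s ≠ 0 := by intro s; rw [hDe]; positivity
  have hQe : ∀ i s, (Q i).eval s = D.eval s * stereo x y t (s, c + m * s) i := by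
    intro i s
    have h0 := hD0 s
    rw [hDe] at h0 ⊢
    simp only [stereo, Pi.smul_apply, Pi.add_apply, smul_eq_mul]
    rw [mul_inv_cancel_left₀ h0]
    simp [hQ, hL]; ring
  have hDt : HasTopCoeff 2 D (1 + m ^ 2) := by
    have e : D = Polynomial.C (1 + m ^ 2) * Polynomial.X ^ 2 +
      Polynomial.C (2 * c * m) * Polynomial.X + Polynomial.C (1 + c ^ 2) := by
      simp only [hD, hL, map_add, map_mul, map_pow, map_one, map_ofNat]; ring
    rw [e]
    exact HasTopCoeff.quadratic _ _ _
  have hQt : ∀ i, HasTopCoeff 2 (Q i) ((1 + m ^ 2) * t i) := by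
    intro i
    have e : Q i = Polynomial.C ((1 + m ^ 2) * t i) * Polynomial.X ^ 2 +
      Polynomial.C (2 * x i + 2 * y i * m + 2 * c * m * t i) * Polynomial.X +
      Polynomial.C (2 * y i * c + t i * (c ^ 2 - 1)) := by
      simp only [hQ, hL, map_add, map_sub, map_mul, map_pow, map_one, map_ofNat]; ring
    rw [e]
    exact HasTopCoeff.quadratic _ _ _
  refine ⟨∑ α ∈ p.support, Polynomial.C (coeff α p) *
    (D ^ (d - ∑ i, α i) * ∏ i, Q i ^ α i), ?_, fun s => ?_⟩
  · have h : ∀ α ∈ p.support, HasTopCoeff (2 * d) (Polynomial.C (coeff α p) *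
        (D ^ (d - ∑ i, α i) * ∏ i, Q i ^ α i))
        ((1 + m ^ 2) ^ d * (coeff α p * ∏ i, t i ^ α i)) := by
      intro α hα
      have hle := sum_le_of_mem_support hp hα
      have h1 := (HasTopCoeff.C (coeff α p)).mul ((hDt.pow (d - ∑ i, α i)).mul
        (HasTopCoeff.prod Finset.univ fun i _ => (hQt i).pow (α i)))
      convert h1 using 1
      · rw [← Finset.sum_mul]; omega
      · simp_rw [mul_pow]
        rw [Finset.prod_mul_distrib, Finset.prod_pow_eq_pow_sum]
        conv_lhs => rw [← Nat.sub_add_cancel hle, pow_add]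
        ring
    have := HasTopCoeff.sum _ h
    rwa [← Finset.mul_sum, ← eval_eq'] at this
  · rw [Polynomial.eval_finsetSum, eval_eq', Finset.mul_sum]
    refine Finset.sum_congr rfl fun α hα => ?_
    have hle := sum_le_of_mem_support hp hα
    simp only [Polynomial.eval_mul, Polynomial.eval_C, Polynomial.eval_pow, Polynomial.eval_prod,
      hQe, mul_pow]
    rw [Finset.prod_mul_distrib, Finset.prod_pow_eq_pow_sum, ← hDe]
    conv_rhs => rw [← Nat.sub_add_cancel hle, pow_add]
    ring

lemma continuous_stereo {n : ℕ} :
    Continuous fun z : ((Fin n → ℝ) × (Fin n → ℝ)) × (Fin n → ℝ) × (ℝ × ℝ) =>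
      stereo z.1.1 z.1.2 z.2.1 z.2.2 := by
  unfold stereo
  have h : ∀ w : ℝ × ℝ, 1 + (w.1 ^ 2 + w.2 ^ 2) ≠ 0 := fun w => by positivity
  refine Continuous.smul (Continuous.inv₀ (by fun_prop) fun z => h _) (by fun_prop)

lemma volume_stereo_sublevel_le {n d : ℕ} (hd : 0 < d) {p : MvPolynomial (Fin n) ℝ}
    (hp : p.totalDegree ≤ d) (hpos : ∀ x, 0 ≤ eval x p) (x y t : Fin n → ℝ) (ht : 0 < eval t p)
    {v η : ℝ} (hη : 0 < η) (hv : 5 ^ d * v ≤ eval t p * η ^ d) :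
    volume {w : ℝ × ℝ | w.1 ^ 2 + w.2 ^ 2 ≤ 4 ∧ eval (stereo x y t w) p ≤ v} ≤
      ENNReal.ofReal (176 * η * Real.pi) := by
  have hcont : Continuous fun w : ℝ × ℝ => eval (stereo x y t w) p :=
    (MvPolynomial.continuous_eval p).comp
      (continuous_stereo.comp (by fun_prop : Continuous fun w : ℝ × ℝ => ((x, y), t, w)))
  have hA : MeasurableSet {w : ℝ × ℝ | w.1 ^ 2 + w.2 ^ 2 ≤ 4 ∧ eval (stereo x y t w) p ≤ v} :=
    ((isClosed_le (f := fun w : ℝ × ℝ => w.1 ^ 2 + w.2 ^ 2) (by fun_prop) continuous_const).inter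
      (isClosed_le hcont continuous_const)).measurableSet
  refine volume_le_of_forall_line hA ?_ (by positivity) fun m c => ?_
  · refine ((measure_mono (t := Metric.closedBall 0 2) fun w hw => ?_).trans_lt
      measure_closedBall_lt_top).ne
    rw [mem_closedBall_zero_iff, Prod.norm_def]
    have h1 := hw.1
    refine max_le (abs_le_of_sq_le_sq ?_ (by norm_num)) (abs_le_of_sq_le_sq ?_ (by norm_num))
    · nlinarith [sq_nonneg w.2]
    · nlinarith [sq_nonneg w.1]
  · obtain ⟨R, ⟨hR, hRc⟩, hRe⟩ := exists_polynomial_stereo_line hp x y t m c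
    have hm : 0 < 1 + m ^ 2 := by positivity
    have hδ : 0 < √(η / (1 + m ^ 2)) := Real.sqrt_pos.2 (by positivity)
    have h := lintegral_abs_sub_le_of_polynomial (N := 2 * d) (by omega) hR
      (by rw [hRc]; positivity) hδ
      (E := {s | (s, c + m * s) ∈
        {w : ℝ × ℝ | w.1 ^ 2 + w.2 ^ 2 ≤ 4 ∧ eval (stereo x y t w) p ≤ v}})
      (hA.preimage (f := fun s : ℝ => (s, c + m * s)) (by fun_prop)) fun s hs => ?_
    · rw [Real.sq_sqrt (by positivity)] at h
      rwa [mul_div_assoc]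
    · have h4 := hs.1
      have h5 := hs.2
      simp only at h4 h5
      have hD : 0 ≤ 1 + (s ^ 2 + (c + m * s) ^ 2) := by positivity
      rw [hRe, abs_of_nonneg (mul_nonneg (pow_nonneg hD _) (hpos _)), hRc, pow_mul,
        Real.sq_sqrt (by positivity), div_pow]
      have e : (1 + m ^ 2) ^ d * eval t p * (η ^ d / (1 + m ^ 2) ^ d) = eval t p * η ^ d := by
        field_simp
      rw [e]
      refine le_trans ?_ hv
      have h6 := hpos (stereo x y t (s, c + m * s))
      gcongr
      linarith

lemma mul_rpow_div_le_add {d : ℕ} (hd : 0 < d) {a b : ℝ} (ha : 0 < a) (hb : 0 < b) :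
    b * (a / b) ^ ((d : ℝ)⁻¹) ≤ a + b := by
  have hd1 : (1 : ℝ) ≤ d := by exact_mod_cast hd
  have hi : (d : ℝ)⁻¹ ≤ 1 := inv_le_one_of_one_le₀ hd1
  have hi0 : 0 ≤ (d : ℝ)⁻¹ := by positivity
  have h := Real.geom_mean_le_arith_mean2_weighted hi0 (sub_nonneg.2 hi) (div_pos ha hb).le
    zero_le_one (by ring)
  rw [Real.one_rpow, mul_one] at h
  have h2 : (a / b) ^ ((d : ℝ)⁻¹) ≤ a / b + 1 := by
    have : 0 ≤ a / b := by positivity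
    nlinarith
  calc b * (a / b) ^ ((d : ℝ)⁻¹) ≤ b * (a / b + 1) := by gcongr
    _ = a + b := by field_simp

lemma ofReal_mul_volume_stereo_sublevel_le {n d : ℕ} (hd : 0 < d) {p : MvPolynomial (Fin n) ℝ}
    (hp : p.totalDegree ≤ d) (hpos : ∀ x, 0 ≤ eval x p) (x y t : Fin n → ℝ)
    {μ τ : ℝ} (hμ : 0 < μ) (hτ : 0 < τ) :
    ENNReal.ofReal (eval t p) *
      volume {w : ℝ × ℝ | w.1 ^ 2 + w.2 ^ 2 ≤ 4 ∧ eval (stereo x y t w) p ≤ τ ^ d * μ} ≤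
      ENNReal.ofReal (880 * Real.pi * τ) * ENNReal.ofReal (μ + eval t p) := by
  rcases (hpos t).eq_or_lt with ht | ht
  · simp [← ht]
  · have hη : 0 < 5 * τ * (μ / eval t p) ^ ((d : ℝ)⁻¹) := by positivity
    have h := volume_stereo_sublevel_le hd hp hpos x y t ht (v := τ ^ d * μ) hη ?_
    · refine (mul_le_mul_right h _).trans ?_
      rw [← ENNReal.ofReal_mul ht.le, ← ENNReal.ofReal_mul (by positivity)]
      refine ENNReal.ofReal_le_ofReal ?_
      have h2 := mul_rpow_div_le_add hd hμ ht
      calc _ = 880 * Real.pi * τ * (eval t p * (μ / eval t p) ^ ((d : ℝ)⁻¹)) := by ring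
        _ ≤ _ := by gcongr
    · rw [mul_pow, mul_pow, Real.rpow_inv_natCast_pow (by positivity) hd.ne']
      apply le_of_eq
      field_simp

lemma lintegral_Ioc_le_lintegral_height {H : ℝ → ENNReal} :
    ∫⁻ s in Set.Ioc (-(1 / 2) : ℝ) (1 / 2), H s ≤
      ∫⁻ r in Set.Ioo (0 : ℝ) 2, 4 * (ENNReal.ofReal r * H ((r ^ 2 - 1) / (1 + r ^ 2))) := by
  have hderiv : ∀ r : ℝ, HasDerivAt (fun r : ℝ => (r ^ 2 - 1) / (1 + r ^ 2))
      (4 * r / (1 + r ^ 2) ^ 2) r := by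
    intro r
    have h1 : HasDerivAt (fun r : ℝ => r ^ 2 - 1) (2 * r) r := by
      simpa using (hasDerivAt_pow 2 r).sub_const 1
    have h2 : HasDerivAt (fun r : ℝ => 1 + r ^ 2) (2 * r) r := by
      simpa using (hasDerivAt_pow 2 r).const_add 1
    refine (h1.div h2 (by positivity)).congr_deriv ?_
    congr 1
    ring
  have hinj : Set.InjOn (fun r : ℝ => (r ^ 2 - 1) / (1 + r ^ 2)) (Set.Ioo 0 2) := by
    intro a ha b hb hab
    have h1 : 0 < 1 + a ^ 2 := by positivity
    have h2 : 0 < 1 + b ^ 2 := by positivity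
    simp only at hab
    rw [div_eq_div_iff h1.ne' h2.ne'] at hab
    have : a ^ 2 = b ^ 2 := by linarith
    exact (pow_left_inj₀ ha.1.le hb.1.le two_ne_zero).1 this
  calc ∫⁻ s in Set.Ioc (-(1 / 2) : ℝ) (1 / 2), H s
      ≤ ∫⁻ s in (fun r : ℝ => (r ^ 2 - 1) / (1 + r ^ 2)) '' Set.Ioo 0 2, H s := by
        refine lintegral_mono_set fun s hs => ?_
        have h1 : 0 < 1 - s := by linarith [hs.2]
        have h2 : 0 < (1 + s) / (1 - s) := div_pos (by linarith [hs.1]) h1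
        refine ⟨√((1 + s) / (1 - s)), ⟨Real.sqrt_pos.2 h2, ?_⟩, ?_⟩
        · rw [Real.sqrt_lt' two_pos, div_lt_iff₀ h1]; linarith [hs.2]
        · simp only
          rw [Real.sq_sqrt h2.le]; field_simp; ring
    _ = ∫⁻ r in Set.Ioo (0 : ℝ) 2, ENNReal.ofReal |4 * r / (1 + r ^ 2) ^ 2| *
          H ((r ^ 2 - 1) / (1 + r ^ 2)) :=
        lintegral_image_eq_lintegral_abs_deriv_mul measurableSet_Ioo
          (fun r _ => (hderiv r).hasDerivWithinAt) hinj H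
    _ ≤ _ := by
        refine setLIntegral_mono' measurableSet_Ioo fun r hr => ?_
        rw [← mul_assoc]
        gcongr
        rw [← ENNReal.ofReal_ofNat, ← ENNReal.ofReal_mul (by norm_num)]
        have h0 := hr.1
        refine ENNReal.ofReal_le_ofReal ?_
        rw [abs_of_nonneg (by positivity)]
        refine div_le_self (by positivity) ?_
        exact one_le_pow₀ (by nlinarith)

lemma lintegral_radial {G : ℝ → ENNReal} (hG : Measurable G) :
    ∫⁻ w : ℝ × ℝ, G (w.1 ^ 2 + w.2 ^ 2) =
      ENNReal.ofReal (2 * Real.pi) * ∫⁻ r in Set.Ioi (0 : ℝ), ENNReal.ofReal r * G (r ^ 2) := by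
  rw [← lintegral_comp_polarCoord_symm]
  have h : ∀ p : ℝ × ℝ, ENNReal.ofReal p.1 • G ((polarCoord.symm p).1 ^ 2 +
      (polarCoord.symm p).2 ^ 2) = (ENNReal.ofReal p.1 * G (p.1 ^ 2)) * (fun _ => 1) p.2 := by
    intro p
    simp only [polarCoord_symm_apply, smul_eq_mul, mul_one]
    congr 2
    linear_combination p.1 ^ 2 * Real.sin_sq_add_cos_sq p.2
  simp_rw [h]
  rw [polarCoord_target, Measure.volume_eq_prod, ← Measure.prod_restrict,
    lintegral_prod_mul (f := fun r : ℝ => ENNReal.ofReal r * G (r ^ 2)) (g := fun _ : ℝ => 1)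
      (by fun_prop) (by fun_prop)]
  simp only [lintegral_const, one_mul, Measure.restrict_apply MeasurableSet.univ, Set.univ_inter,
    Real.volume_Ioo]
  rw [mul_comm]
  congr 2
  ring

/-- The area form on the disk of radius two dominates the height measure under stereographic
projection. -/
lemma lintegral_Ioc_le_lintegral_disk {H : ℝ → ENNReal} (hH : Measurable H) :
    ENNReal.ofReal Real.pi * ∫⁻ s in Set.Ioc (-(1 / 2) : ℝ) (1 / 2), H s ≤
      2 * ∫⁻ w in {w : ℝ × ℝ | w.1 ^ 2 + w.2 ^ 2 ≤ 4},
        H ((w.1 ^ 2 + w.2 ^ 2 - 1) / (1 + (w.1 ^ 2 + w.2 ^ 2))) := by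
  have hm : MeasurableSet {w : ℝ × ℝ | w.1 ^ 2 + w.2 ^ 2 ≤ 4} :=
    measurableSet_le (by fun_prop) measurable_const
  have h1 := lintegral_radial (G := (Set.Iic (4 : ℝ)).indicator fun q => H ((q - 1) / (1 + q)))
    (Measurable.indicator (by fun_prop) measurableSet_Iic)
  have h2 : ∫⁻ w in {w : ℝ × ℝ | w.1 ^ 2 + w.2 ^ 2 ≤ 4},
      H ((w.1 ^ 2 + w.2 ^ 2 - 1) / (1 + (w.1 ^ 2 + w.2 ^ 2))) =
      ∫⁻ w : ℝ × ℝ, (Set.Iic (4 : ℝ)).indicator (fun q => H ((q - 1) / (1 + q)))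
        (w.1 ^ 2 + w.2 ^ 2) := by
    rw [← lintegral_indicator hm]
    rfl
  have h3 : ∫⁻ r in Set.Ioo (0 : ℝ) 2, ENNReal.ofReal r * H ((r ^ 2 - 1) / (1 + r ^ 2)) ≤
      ∫⁻ r in Set.Ioi (0 : ℝ), ENNReal.ofReal r *
        (Set.Iic (4 : ℝ)).indicator (fun q => H ((q - 1) / (1 + q))) (r ^ 2) := by
    refine le_trans (setLIntegral_mono' measurableSet_Ioo fun r hr => ?_)
      (lintegral_mono_set Set.Ioo_subset_Ioi_self)
    rw [Set.indicator_of_mem]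
    have h0 := hr.1
    have h4 := hr.2
    simp only [Set.mem_Iic]
    nlinarith
  rw [h2, h1]
  calc _ ≤ ENNReal.ofReal Real.pi * (4 * ∫⁻ r in Set.Ioo (0 : ℝ) 2,
        ENNReal.ofReal r * H ((r ^ 2 - 1) / (1 + r ^ 2))) := by
        gcongr
        rw [← lintegral_const_mul 4 (by fun_prop)]
        exact lintegral_Ioc_le_lintegral_height
    _ ≤ ENNReal.ofReal Real.pi * (4 * ∫⁻ r in Set.Ioi (0 : ℝ), ENNReal.ofReal r *
        (Set.Iic (4 : ℝ)).indicator (fun q => H ((q - 1) / (1 + q))) (r ^ 2)) := by gcongr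
    _ = _ := by
        rw [ENNReal.ofReal_mul two_pos.le, ENNReal.ofReal_ofNat]
        ring

lemma lintegral_prod_comp_neg_snd (n : ℕ) {F : (Fin n → ℝ) × (Fin n → ℝ) → ENNReal}
    (hF : Measurable F) :
    ∫⁻ z, F (z.1, -z.2) ∂((gaussianN n).prod (gaussianN n)) =
      ∫⁻ z, F z ∂((gaussianN n).prod (gaussianN n)) :=
  (((MeasurePreserving.id (gaussianN n)).prod
    ⟨measurable_neg, map_neg_gaussianN n⟩).lintegral_comp hF)

lemma lintegral_rotation_swap (n : ℕ) {a q : (Fin n → ℝ) → ENNReal} (ha : Measurable a)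
    (hq : Measurable q) {s c : ℝ} (h : s ^ 2 + c ^ 2 = 1) :
    ∫⁻ z, a z.1 * q (s • z.1 + c • z.2) ∂((gaussianN n).prod (gaussianN n)) =
      ∫⁻ z, q z.1 * a (s • z.1 + c • z.2) ∂((gaussianN n).prod (gaussianN n)) := by
  rw [← lintegral_prod_comp_neg_snd n (F := fun z => q z.1 * a (s • z.1 + c • z.2))
    (by fun_prop), ← (measurePreserving_rotation_gaussianN n h).lintegral_comp
      (f := fun z => q z.1 * a (s • z.1 + c • -z.2)) (by fun_prop)]
  refine lintegral_congr fun z => ?_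
  have e : s • (s • z.1 + c • z.2) + c • -(-c • z.1 + s • z.2) = z.1 := by
    ext i
    simp only [Pi.add_apply, Pi.smul_apply, Pi.neg_apply, smul_eq_mul]
    linear_combination z.1 i * h
  simp only [e]
  rw [mul_comm]

lemma lintegral_comp_stereo (n : ℕ) {a : (Fin n → ℝ) → ENNReal} (ha : Measurable a)
    (t : Fin n → ℝ) (w : ℝ × ℝ) {s : ℝ}
    (hs : s = (w.1 ^ 2 + w.2 ^ 2 - 1) / (1 + (w.1 ^ 2 + w.2 ^ 2))) :
    ∫⁻ z, a (stereo z.1 z.2 t w) ∂((gaussianN n).prod (gaussianN n)) =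
      ∫⁻ v, a (s • t + √(1 - s ^ 2) • v) ∂(gaussianN n) := by
  have hD : 0 < 1 + (w.1 ^ 2 + w.2 ^ 2) := by positivity
  set r := √(w.1 ^ 2 + w.2 ^ 2) with hr
  have hr2 : r ^ 2 = w.1 ^ 2 + w.2 ^ 2 := Real.sq_sqrt (by positivity)
  have hr0 : 0 ≤ r := Real.sqrt_nonneg _
  have hc : √(1 - s ^ 2) = 2 * r / (1 + (w.1 ^ 2 + w.2 ^ 2)) := by
    rw [← Real.sqrt_sq (by positivity : 0 ≤ 2 * r / (1 + (w.1 ^ 2 + w.2 ^ 2)))]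
    congr 1
    rw [hs, div_pow, div_pow, mul_pow, hr2]
    field_simp
    ring
  have hst : ∀ z : (Fin n → ℝ) × (Fin n → ℝ), r ≠ 0 → stereo z.1 z.2 t w =
      s • t + √(1 - s ^ 2) • ((w.1 / r) • z.1 + (w.2 / r) • z.2) := by
    intro z h0
    rw [hc, hs]
    ext i
    simp only [stereo, Pi.add_apply, Pi.smul_apply, smul_eq_mul]
    field_simp
    ring
  rcases hr0.eq_or_lt with h0 | h0
  · have hw : w.1 ^ 2 + w.2 ^ 2 = 0 := by rw [← hr2, ← h0]; norm_num
    have h1 : w.1 = 0 := by nlinarith [sq_nonneg w.1, sq_nonneg w.2]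
    have h2 : w.2 = 0 := by nlinarith [sq_nonneg w.1, sq_nonneg w.2]
    have hs1 : s = -1 := by rw [hs, hw]; norm_num
    simp [stereo, h1, h2, hs1]
  · have h1 : (w.1 / r) ^ 2 + (w.2 / r) ^ 2 = 1 := by
      rw [div_pow, div_pow, ← add_div, ← hr2, div_self (by positivity)]
    simp_rw [hst _ h0.ne']
    rw [(measurePreserving_rotation_gaussianN n h1).lintegral_comp
      (f := fun z => a (s • t + √(1 - s ^ 2) • z.1)) (by fun_prop)]
    rw [lintegral_prod _ (by fun_prop)]
    simp

lemma measurable_ofReal_eval {n : ℕ} (p : MvPolynomial (Fin n) ℝ) :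
    Measurable fun x => ENNReal.ofReal (eval x p) :=
  (MvPolynomial.continuous_eval p).measurable.ennreal_ofReal

lemma mul_lintegral_le_lintegral_Ioc {n d : ℕ} {p : MvPolynomial (Fin n) ℝ}
    (hp : p.totalDegree ≤ d) (hpos : ∀ x, 0 ≤ eval x p) {a : (Fin n → ℝ) → ENNReal}
    (ha : Measurable a) :
    (∫⁻ x, a x ∂(gaussianN n)) * ∫⁻ x, ENNReal.ofReal (eval x p) ∂(gaussianN n) ≤
      ENNReal.ofReal (2 * d + 3) * ∫⁻ s in Set.Ioc (-(1 / 2) : ℝ) (1 / 2),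
        ∫⁻ z, a z.1 * ENNReal.ofReal (eval (s • z.1 + √(1 - s ^ 2) • z.2) p)
          ∂((gaussianN n).prod (gaussianN n)) := by
  have hq := measurable_ofReal_eval p
  set q : (Fin n → ℝ) → ENNReal := fun x => ENNReal.ofReal (eval x p) with hqdef
  change (∫⁻ x, a x ∂(gaussianN n)) * ∫⁻ x, q x ∂(gaussianN n) ≤
      ENNReal.ofReal (2 * d + 3) * ∫⁻ s in Set.Ioc (-(1 / 2) : ℝ) (1 / 2),
        ∫⁻ z, a z.1 * q (s • z.1 + √(1 - s ^ 2) • z.2) ∂((gaussianN n).prod (gaussianN n))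
  have hmul : (∫⁻ x, a x ∂(gaussianN n)) * ∫⁻ x, q x ∂(gaussianN n) =
      ∫⁻ z, a z.1 * q z.2 ∂((gaussianN n).prod (gaussianN n)) :=
    (lintegral_prod_mul ha.aemeasurable hq.aemeasurable).symm
  have h2 : 2 * ∫⁻ z, a z.1 * q z.2 ∂((gaussianN n).prod (gaussianN n)) =
      ∫⁻ z, a z.1 * (q z.2 + q (-z.2)) ∂((gaussianN n).prod (gaussianN n)) := by
    simp_rw [mul_add]
    rw [lintegral_add_left (by fun_prop), two_mul]
    congr 1
    exact (lintegral_prod_comp_neg_snd n (F := fun z => a z.1 * q z.2) (by fun_prop)).symm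
  have h3 : ∀ s : ℝ, ∫⁻ z, a z.1 * (q (s • z.1 + √(1 - s ^ 2) • z.2) +
      q (s • z.1 + √(1 - s ^ 2) • (-z.2))) ∂((gaussianN n).prod (gaussianN n)) =
      2 * ∫⁻ z, a z.1 * q (s • z.1 + √(1 - s ^ 2) • z.2) ∂((gaussianN n).prod (gaussianN n)) := by
    intro s
    simp_rw [mul_add]
    rw [lintegral_add_left (by fun_prop), two_mul]
    congr 1
    exact lintegral_prod_comp_neg_snd n
      (F := fun z => a z.1 * q (s • z.1 + √(1 - s ^ 2) • z.2)) (by fun_prop)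
  have key : 2 * ∫⁻ z, a z.1 * q z.2 ∂((gaussianN n).prod (gaussianN n)) ≤
      2 * (ENNReal.ofReal (2 * d + 3) * ∫⁻ s in Set.Ioc (-(1 / 2) : ℝ) (1 / 2),
        ∫⁻ z, a z.1 * q (s • z.1 + √(1 - s ^ 2) • z.2)
          ∂((gaussianN n).prod (gaussianN n))) := by
    calc _ = ∫⁻ z, a z.1 * (q z.2 + q (-z.2)) ∂((gaussianN n).prod (gaussianN n)) := h2
      _ ≤ ∫⁻ z, (ENNReal.ofReal (2 * d + 3) * ∫⁻ s in Set.Ioc (-(1 / 2) : ℝ) (1 / 2),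
          a z.1 * (q (s • z.1 + √(1 - s ^ 2) • z.2) + q (s • z.1 + √(1 - s ^ 2) • (-z.2))))
          ∂((gaussianN n).prod (gaussianN n)) := by
        refine lintegral_mono fun z => ?_
        rw [lintegral_const_mul _ (by fun_prop), mul_left_comm]
        gcongr
        exact ofReal_eval_add_le_lintegral hp hpos z.1 z.2
      _ = ENNReal.ofReal (2 * d + 3) * ∫⁻ s in Set.Ioc (-(1 / 2) : ℝ) (1 / 2),
          ∫⁻ z, a z.1 * (q (s • z.1 + √(1 - s ^ 2) • z.2) + q (s • z.1 + √(1 - s ^ 2) • (-z.2)))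
          ∂((gaussianN n).prod (gaussianN n)) := by
        rw [lintegral_const_mul _ (by fun_prop), lintegral_lintegral_swap (by fun_prop)]
      _ = _ := by
        simp_rw [h3]
        rw [lintegral_const_mul _ (by fun_prop), mul_left_comm]
  rw [hmul]
  exact (ENNReal.mul_le_mul_iff_right two_ne_zero ENNReal.ofNat_ne_top).1 key

lemma lintegral_disk_stereo_le {n d : ℕ} (hd : 0 < d) {p : MvPolynomial (Fin n) ℝ}
    (hp : p.totalDegree ≤ d) (hpos : ∀ x, 0 ≤ eval x p) {μ τ : ℝ} (hμ : 0 < μ) (hτ : 0 < τ)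
    (u : (Fin n → ℝ) × (Fin n → ℝ) × (Fin n → ℝ)) :
    ∫⁻ w in {w : ℝ × ℝ | w.1 ^ 2 + w.2 ^ 2 ≤ 4}, ENNReal.ofReal (eval u.1 p) *
        {x | eval x p ≤ τ ^ d * μ}.indicator (fun _ => 1) (stereo u.2.1 u.2.2 u.1 w) ≤
      ENNReal.ofReal (880 * Real.pi * τ) * ENNReal.ofReal (μ + eval u.1 p) := by
  have hB : MeasurableSet {w : ℝ × ℝ | eval (stereo u.2.1 u.2.2 u.1 w) p ≤ τ ^ d * μ} :=
    (isClosed_le ((MvPolynomial.continuous_eval p).comp (continuous_stereo.comp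
      (by fun_prop : Continuous fun w : ℝ × ℝ => (u.2, u.1, w)))) continuous_const).measurableSet
  refine le_trans (le_of_eq ?_)
    (ofReal_mul_volume_stereo_sublevel_le hd hp hpos u.2.1 u.2.2 u.1 hμ hτ)
  have e : ∀ w : ℝ × ℝ, {x | eval x p ≤ τ ^ d * μ}.indicator (fun _ => (1 : ENNReal))
      (stereo u.2.1 u.2.2 u.1 w) = {w : ℝ × ℝ | eval (stereo u.2.1 u.2.2 u.1 w) p ≤
        τ ^ d * μ}.indicator (fun _ => 1) w := fun w => rfl
  simp_rw [e]
  rw [lintegral_const_mul _ (measurable_const.indicator hB), lintegral_indicator hB,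
    setLIntegral_const, one_mul, Measure.restrict_apply hB]
  congr 2
  ext w
  simp [and_comm]

/-- A nonnegative polynomial with mean `μ` under the standard Gaussian measure is rarely much
smaller than `μ`, uniformly in the number of variables. -/
theorem gaussianN_sublevel_le {n d : ℕ} (hd : 0 < d) {p : MvPolynomial (Fin n) ℝ}
    (hp : p.totalDegree ≤ d) (hpos : ∀ x, 0 ≤ eval x p) {μ τ : ℝ} (hμ : 0 < μ) (hτ : 0 < τ)
    (hint : ∫⁻ x, ENNReal.ofReal (eval x p) ∂(gaussianN n) = ENNReal.ofReal μ) :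
    gaussianN n {x | eval x p ≤ τ ^ d * μ} ≤ ENNReal.ofReal (17600 * d * τ) := by
  have hA : MeasurableSet {x : Fin n → ℝ | eval x p ≤ τ ^ d * μ} :=
    (isClosed_le (MvPolynomial.continuous_eval p) continuous_const).measurableSet
  have ha : Measurable ({x : Fin n → ℝ | eval x p ≤ τ ^ d * μ}.indicator
    fun _ => (1 : ENNReal)) := measurable_const.indicator hA
  have hbound := lintegral_disk_stereo_le hd hp hpos hμ hτ
  have haint : ∫⁻ x, {x : Fin n → ℝ | eval x p ≤ τ ^ d * μ}.indicator
      (fun _ => (1 : ENNReal)) x ∂(gaussianN n) =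
      gaussianN n {x | eval x p ≤ τ ^ d * μ} := by
    rw [lintegral_indicator hA, setLIntegral_const, one_mul]
  have hF := mul_lintegral_le_lintegral_Ioc hp hpos ha
  rw [haint, hint] at hF
  have hq := measurable_ofReal_eval p
  generalize hadef : {x : Fin n → ℝ | eval x p ≤ τ ^ d * μ}.indicator
    (fun _ => (1 : ENNReal)) = a at *
  set H : ℝ → ENNReal := fun s => ∫⁻ z, ENNReal.ofReal (eval z.1 p) *
    a (s • z.1 + √(1 - s ^ 2) • z.2) ∂((gaussianN n).prod (gaussianN n)) with hH
  have hHm : Measurable H := by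
    refine Measurable.lintegral_prod_right' (f := fun y : ℝ × ((Fin n → ℝ) × (Fin n → ℝ)) =>
      ENNReal.ofReal (eval y.2.1 p) * a (y.1 • y.2.1 + √(1 - y.1 ^ 2) • y.2.2)) ?_
    exact (hq.comp (by fun_prop)).mul (ha.comp (by fun_prop))
  have hrot : ∫⁻ s in Set.Ioc (-(1 / 2) : ℝ) (1 / 2),
      ∫⁻ z, a z.1 * ENNReal.ofReal (eval (s • z.1 + √(1 - s ^ 2) • z.2) p)
        ∂((gaussianN n).prod (gaussianN n)) = ∫⁻ s in Set.Ioc (-(1 / 2) : ℝ) (1 / 2), H s := by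
    refine setLIntegral_congr_fun measurableSet_Ioc fun s hs => ?_
    refine lintegral_rotation_swap n ha hq ?_
    rw [Real.sq_sqrt] <;> nlinarith [hs.1, hs.2]
  have hst : ∀ w : ℝ × ℝ, H ((w.1 ^ 2 + w.2 ^ 2 - 1) / (1 + (w.1 ^ 2 + w.2 ^ 2))) =
      ∫⁻ u, ENNReal.ofReal (eval u.1 p) * a (stereo u.2.1 u.2.2 u.1 w)
        ∂((gaussianN n).prod ((gaussianN n).prod (gaussianN n))) := by
    intro w
    have hsm : Measurable fun u : (Fin n → ℝ) × (Fin n → ℝ) × (Fin n → ℝ) =>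
        stereo u.2.1 u.2.2 u.1 w := (continuous_stereo.comp (by fun_prop : Continuous
          fun u : (Fin n → ℝ) × (Fin n → ℝ) × (Fin n → ℝ) => (u.2, u.1, w))).measurable
    rw [hH]
    simp only
    rw [lintegral_prod _ ?_, lintegral_prod _ ?_]
    rotate_left
    · exact ((hq.comp measurable_fst).mul (ha.comp hsm)).aemeasurable
    · exact ((hq.comp measurable_fst).mul (ha.comp (by fun_prop))).aemeasurable
    refine lintegral_congr fun t => ?_
    simp only
    rw [lintegral_const_mul' _ _ ENNReal.ofReal_ne_top,
      lintegral_const_mul' _ _ ENNReal.ofReal_ne_top, lintegral_comp_stereo n ha t w rfl]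
  have hdisk : ∫⁻ w in {w : ℝ × ℝ | w.1 ^ 2 + w.2 ^ 2 ≤ 4},
      H ((w.1 ^ 2 + w.2 ^ 2 - 1) / (1 + (w.1 ^ 2 + w.2 ^ 2))) ≤
      ENNReal.ofReal (880 * Real.pi * τ) * ENNReal.ofReal (2 * μ) := by
    simp_rw [hst]
    rw [lintegral_lintegral_swap]
    · refine (lintegral_mono hbound).trans ?_
      rw [lintegral_const_mul]
      · gcongr
        rw [lintegral_prod _ ?_]
        · simp only [lintegral_const, measure_univ, mul_one]
          simp_rw [ENNReal.ofReal_add hμ.le (hpos _)]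
          rw [lintegral_add_left measurable_const, hint, lintegral_const, measure_univ, mul_one,
            ← ENNReal.ofReal_add hμ.le hμ.le, two_mul]
        · have := measurable_ofReal_eval (C μ + p)
          simp only [map_add, eval_C] at this
          exact (this.comp measurable_fst).aemeasurable
      · have := measurable_ofReal_eval (C μ + p)
        simp only [map_add, eval_C] at this
        exact this.comp measurable_fst
    · exact ((hq.comp (by fun_prop)).mul (ha.comp (continuous_stereo.comp (by fun_prop :
        Continuous fun v : (ℝ × ℝ) × ((Fin n → ℝ) × (Fin n → ℝ) × (Fin n → ℝ)) =>
          (v.2.2, v.2.1, v.1))).measurable)).aemeasurable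
  have hfin := (lintegral_Ioc_le_lintegral_disk hHm).trans (mul_le_mul_right hdisk 2)
  rw [hrot] at hF
  have hπ := Real.pi_pos
  have hmain : ENNReal.ofReal (Real.pi * μ) * gaussianN n {x | eval x p ≤ τ ^ d * μ} ≤
      ENNReal.ofReal (Real.pi * μ) * ENNReal.ofReal (17600 * d * τ) := by
    calc _ = ENNReal.ofReal Real.pi *
          (gaussianN n {x | eval x p ≤ τ ^ d * μ} * ENNReal.ofReal μ) := by
          rw [ENNReal.ofReal_mul hπ.le]; ring
      _ ≤ ENNReal.ofReal Real.pi * (ENNReal.ofReal (2 * d + 3) *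
          ∫⁻ s in Set.Ioc (-(1 / 2) : ℝ) (1 / 2), H s) := by gcongr
      _ = ENNReal.ofReal (2 * d + 3) * (ENNReal.ofReal Real.pi *
          ∫⁻ s in Set.Ioc (-(1 / 2) : ℝ) (1 / 2), H s) := mul_left_comm _ _ _
      _ ≤ ENNReal.ofReal (2 * d + 3) *
          (2 * (ENNReal.ofReal (880 * Real.pi * τ) * ENNReal.ofReal (2 * μ))) := by gcongr
      _ ≤ _ := by
          rw [← ENNReal.ofReal_ofNat, ← ENNReal.ofReal_mul (by positivity),
            ← ENNReal.ofReal_mul (by positivity), ← ENNReal.ofReal_mul (by positivity),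
            ← ENNReal.ofReal_mul (by positivity)]
          refine ENNReal.ofReal_le_ofReal ?_
          have hd1 : (1 : ℝ) ≤ d := by exact_mod_cast hd
          have : 0 < Real.pi * μ * τ := by positivity
          nlinarith
  exact (ENNReal.mul_le_mul_iff_right (by simpa using mul_pos hπ hμ) ENNReal.ofReal_ne_top).1 hmain

lemma integrable_eval_gaussianN {n : ℕ} (p : MvPolynomial (Fin n) ℝ) :
    Integrable (fun x => eval x p) (gaussianN n) := by
  simp_rw [eval_eq']
  refine integrable_finsetSum _ fun m _ => Integrable.const_mul ?_ _
  refine Integrable.fintype_prod (f := fun i (t : ℝ) => t ^ m i) fun i => ?_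
  have h := (memLp_id_gaussianReal (μ := 0) (v := 1) (m i : NNReal)).integrable_norm_pow'
    (p := m i)
  exact h.mono' (by fun_prop) (Filter.Eventually.of_forall fun t => by simp)

lemma exists_integral_polynomial {Ω : Type*} [MeasurableSpace Ω] {μ : Measure Ω} {n D : ℕ}
    {f : Ω → MvPolynomial (Fin n) ℝ} (hdeg : ∀ ω, (f ω).totalDegree ≤ D)
    (hint : ∀ m, Integrable (fun ω => coeff m (f ω)) μ) :
    ∃ q : MvPolynomial (Fin n) ℝ, q.totalDegree ≤ D ∧
      ∀ Φ : MvPolynomial (Fin n) ℝ →ₗ[ℝ] ℝ, Φ q = ∫ ω, Φ (f ω) ∂μ := by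
  have hfin : {m : Fin n →₀ ℕ | m.degree ≤ D}.Finite := Finsupp.finite_of_degree_le D
  have hf : ∀ ω, f ω = ∑ m ∈ hfin.toFinset, coeff m (f ω) • monomial m 1 := by
    intro ω
    conv_lhs => rw [(f ω).as_sum]
    simp only [smul_monomial, smul_eq_mul, mul_one]
    refine Finset.sum_subset (fun m hm => ?_) fun m _ hm => ?_
    · simpa [Finsupp.degree_eq_sum] using sum_le_of_mem_support (hdeg ω) hm
    · rw [notMem_support_iff.1 hm, monomial_zero]
  refine ⟨∑ m ∈ hfin.toFinset, (∫ ω, coeff m (f ω) ∂μ) • monomial m 1, ?_, fun Φ => ?_⟩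
  · refine totalDegree_finsetSum_le fun m hm => ?_
    refine (totalDegree_smul_le _ _).trans ((totalDegree_monomial_le _ _).trans ?_)
    exact (by simpa using hm : m.degree ≤ D)
  · simp_rw [map_sum, map_smul]
    conv_rhs =>
      enter [2, ω]
      rw [hf ω, map_sum]
      simp only [map_smul, smul_eq_mul]
    rw [integral_finsetSum _ fun m _ => (hint m).mul_const _]
    simp_rw [integral_mul_const, smul_eq_mul]

/-- Every coefficient of `f υ` is a polynomial in `υ`. -/
def HasPolynomialCoeffs {n I : ℕ} (f : (Fin I → ℝ) → MvPolynomial (Fin n) ℝ) : Prop :=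
  ∀ m, ∃ P : MvPolynomial (Fin I) ℝ, ∀ υ, coeff m (f υ) = eval υ P

namespace HasPolynomialCoeffs

variable {n I : ℕ} {f g : (Fin I → ℝ) → MvPolynomial (Fin n) ℝ}

lemma add (hf : HasPolynomialCoeffs f) (hg : HasPolynomialCoeffs g) :
    HasPolynomialCoeffs fun υ => f υ + g υ := fun m => by
  obtain ⟨P, hP⟩ := hf m
  obtain ⟨Q, hQ⟩ := hg m
  exact ⟨P + Q, fun υ => by rw [coeff_add, map_add, hP, hQ]⟩

lemma mul (hf : HasPolynomialCoeffs f) (hg : HasPolynomialCoeffs g) :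
    HasPolynomialCoeffs fun υ => f υ * g υ := fun m => by
  choose P hP using hf
  choose Q hQ using hg
  exact ⟨∑ x ∈ Finset.HasAntidiagonal.antidiagonal m, P x.1 * Q x.2, fun υ => by
    rw [coeff_mul, map_sum]
    exact Finset.sum_congr rfl fun x _ => by rw [map_mul, hP, hQ]⟩

lemma const (p : MvPolynomial (Fin n) ℝ) :
    HasPolynomialCoeffs fun _ : Fin I → ℝ => p := fun m => ⟨C (coeff m p), fun υ => by simp⟩

lemma coord (b : ℝ) (i : Fin I) :
    HasPolynomialCoeffs fun υ : Fin I → ℝ => (C (b * υ i) : MvPolynomial (Fin n) ℝ) := fun m => by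
  classical
  by_cases h : 0 = m
  · exact ⟨C b * X i, fun υ => by simp [coeff_C, h]⟩
  · exact ⟨0, fun υ => by simp [coeff_C, h]⟩

lemma aeval_affine (a b : ℝ) (p : MvPolynomial (Fin n) ℝ) :
    HasPolynomialCoeffs fun y : Fin n → ℝ =>
      aeval (fun i => C a * X i + C (b * y i) : Fin n → MvPolynomial (Fin n) ℝ) p := by
  induction p using MvPolynomial.induction_on with
  | C c =>
    have h : ∀ y : Fin n → ℝ, aeval (fun i => C a * X i + C (b * y i) :
        Fin n → MvPolynomial (Fin n) ℝ) (C c : MvPolynomial (Fin n) ℝ) = C c := fun y => by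
      rw [aeval_C, algebraMap_eq]
    simp only [h]
    exact const (C c)
  | add p q hp hq =>
    simp only [map_add]
    exact hp.add hq
  | mul_X p i hp =>
    have h : HasPolynomialCoeffs fun y : Fin n → ℝ =>
        (C a * X i + C (b * y i) : MvPolynomial (Fin n) ℝ) :=
      (const (C a * X i : MvPolynomial (Fin n) ℝ)).add (coord b i)
    have e : ∀ y : Fin n → ℝ, aeval (fun i => C a * X i + C (b * y i) :
        Fin n → MvPolynomial (Fin n) ℝ) (p * X i) = aeval (fun i => C a * X i + C (b * y i) :
        Fin n → MvPolynomial (Fin n) ℝ) p * (C a * X i + C (b * y i)) := fun y => by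
      rw [map_mul, aeval_X]
    have h2 := hp.mul h
    simp only [← e] at h2
    exact h2

lemma integrable_coeff (hf : HasPolynomialCoeffs f) (m : Fin n →₀ ℕ) :
    Integrable (fun υ => coeff m (f υ)) (gaussianN I) := by
  obtain ⟨P, hP⟩ := hf m
  simpa only [hP] using integrable_eval_gaussianN P

end HasPolynomialCoeffs

lemma totalDegree_aeval_le {n : ℕ} {F : Fin n → MvPolynomial (Fin n) ℝ}
    (hF : ∀ i, (F i).totalDegree ≤ 1) {p : MvPolynomial (Fin n) ℝ} {D : ℕ}
    (hp : p.totalDegree ≤ D) : (aeval F p).totalDegree ≤ D := by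
  rw [aeval_def, eval₂_eq']
  refine totalDegree_finsetSum_le fun m hm => ?_
  refine (totalDegree_mul _ _).trans ?_
  rw [algebraMap_eq, totalDegree_C, zero_add]
  refine (totalDegree_finsetProd _ _).trans (le_trans (Finset.sum_le_sum fun i _ => ?_)
    (sum_le_of_mem_support hp hm))
  exact (totalDegree_pow _ _).trans ((Nat.mul_le_mul_left _ (hF i)).trans (by simp))

lemma eval_aeval_affine {n : ℕ} (p : MvPolynomial (Fin n) ℝ) (u v : Fin n → MvPolynomial (Fin n) ℝ)
    (y : Fin n → ℝ) : eval y (aeval (fun i => u i + v i) p) =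
      eval (fun i => eval y (u i) + eval y (v i)) p := by
  induction p using MvPolynomial.induction_on with
  | C c => simp
  | add p q hp hq => simp only [map_add, hp, hq]
  | mul_X p i hp => simp only [map_mul, aeval_X, map_add, eval_X, hp]

lemma integrable_eval_smul_add {n : ℕ} (p : MvPolynomial (Fin n) ℝ) (a b : ℝ) (x : Fin n → ℝ) :
    Integrable (fun y => eval (a • x + b • y) p) (gaussianN n) := by
  refine (integrable_eval_gaussianN (aeval (fun i => C (a * x i) + C b * X i) p)).congr
    (Filter.Eventually.of_forall fun y => ?_)
  simp only
  rw [eval_aeval_affine p (fun i => C (a * x i)) (fun i => C b * X i)]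
  congr 2
  ext i
  simp

lemma integral_integral_eval_smul_add {n : ℕ} (p : MvPolynomial (Fin n) ℝ) {a b : ℝ}
    (h : a ^ 2 + b ^ 2 = 1) :
    ∫ x, ∫ y, eval (a • x + b • y) p ∂(gaussianN n) ∂(gaussianN n) =
      ∫ x, eval x p ∂(gaussianN n) := by
  have hmp : MeasurePreserving (fun z : (Fin n → ℝ) × (Fin n → ℝ) => a • z.1 + b • z.2)
      ((gaussianN n).prod (gaussianN n)) (gaussianN n) :=
    measurePreserving_fst.comp (measurePreserving_rotation_gaussianN n h)
  have hi : Integrable (fun z : (Fin n → ℝ) × (Fin n → ℝ) => eval (a • z.1 + b • z.2) p)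
      ((gaussianN n).prod (gaussianN n)) :=
    hmp.integrable_comp_of_integrable (integrable_eval_gaussianN p)
  rw [← integral_prod _ hi]
  conv_rhs => rw [← hmp.map_eq]
  rw [integral_map hmp.measurable.aemeasurable
    (MvPolynomial.continuous_eval p).aestronglyMeasurable]

/-- The average of a polynomial over the Gaussian random point `a • x + b • y`. -/
noncomputable def gaussianAverage {n : ℕ} (a b : ℝ) (x : Fin n → ℝ) :
    MvPolynomial (Fin n) ℝ →ₗ[ℝ] ℝ where
  toFun p := ∫ y, eval (a • x + b • y) p ∂(gaussianN n)
  map_add' p q := by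
    simp only [map_add]
    exact integral_add (integrable_eval_smul_add p a b x) (integrable_eval_smul_add q a b x)
  map_smul' c p := by
    simp only [smul_eval, RingHom.id_apply, smul_eq_mul]
    exact integral_const_mul _ _

lemma exists_eval_eq_gaussianAverage {n D : ℕ} (a b : ℝ) {p : MvPolynomial (Fin n) ℝ}
    (hp : p.totalDegree ≤ D) : ∃ q : MvPolynomial (Fin n) ℝ, q.totalDegree ≤ D ∧
      ∀ x, eval x q = gaussianAverage a b x p := by
  have hd : ∀ (y : Fin n → ℝ) (i : Fin n),
      (C a * X i + C (b * y i) : MvPolynomial (Fin n) ℝ).totalDegree ≤ 1 := fun y i =>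
    (totalDegree_add _ _).trans (max_le ((totalDegree_mul _ _).trans (by simp))
      ((totalDegree_C _).trans_le zero_le_one))
  obtain ⟨q, hq, h⟩ := exists_integral_polynomial (μ := gaussianN n) (D := D)
    (f := fun y => aeval (fun i => C a * X i + C (b * y i)) p)
    (fun y => totalDegree_aeval_le (hd y) hp)
    (HasPolynomialCoeffs.aeval_affine a b p).integrable_coeff
  refine ⟨q, hq, fun x => ?_⟩
  have h1 := h (aeval x).toLinearMap
  simp only [AlgHom.toLinearMap_apply, aeval_eq_eval] at h1
  refine h1.trans ?_
  refine integral_congr_ae (Filter.Eventually.of_forall fun y => ?_)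
  simp only
  rw [eval_aeval_affine p (fun i => C a * X i) (fun i => C (b * y i))]
  congr 2
  ext i
  simp

lemma norm2sq_zoom {n : ℕ} (g : MvPolynomial (Fin n) ℝ) (lam : ℝ) (x : Fin n → ℝ) :
    norm2sq (zoom g lam x) = gaussianAverage (√(1 - lam)) (√lam) x (g ^ 2) := by
  refine integral_congr_ae (Filter.Eventually.of_forall fun y => ?_)
  simp only [zoom, map_pow]
  rw [eval_aeval_affine g (fun i => C (√(1 - lam) * x i)) (fun i => C √lam * X i)]
  congr 3
  ext i
  simp

lemma norm2sq_eq_gaussianAverage {n : ℕ} (g : MvPolynomial (Fin n) ℝ) :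
    norm2sq g = gaussianAverage 0 1 0 (g ^ 2) :=
  integral_congr_ae (Filter.Eventually.of_forall fun y => by simp)

lemma norm2sq_nonneg {n : ℕ} (g : MvPolynomial (Fin n) ℝ) : 0 ≤ norm2sq g :=
  integral_nonneg fun _ => sq_nonneg _

/-- The average squared norm of the zooms of a nice distribution is itself a nonnegative polynomial
in the centre of the zoom, and its mean is the average squared norm of the distribution. -/
lemma NiceFamily.exists_polynomial_zoom {n I k : ℕ} {g : (Fin I → ℝ) → MvPolynomial (Fin n) ℝ}
    (hg : NiceFamily n I k g) {lam : ℝ} (h0 : 0 ≤ lam) (h1 : lam ≤ 1) :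
    ∃ P : MvPolynomial (Fin n) ℝ, P.totalDegree ≤ 2 * k ∧
      (∀ x, eval x P = ∫ υ, norm2sq (zoom (g υ) lam x) ∂(gaussianN I)) ∧
      ∫ x, eval x P ∂(gaussianN n) = ∫ υ, norm2sq (g υ) ∂(gaussianN I) := by
  have hc : HasPolynomialCoeffs g := fun m => by
    obtain ⟨P, -, hP⟩ := hg.2 m
    exact ⟨P, hP⟩
  have hc2 : HasPolynomialCoeffs fun υ => g υ ^ 2 := by
    simp only [sq]
    exact hc.mul hc
  obtain ⟨q, hq, hΦ⟩ := exists_integral_polynomial (μ := gaussianN I) (D := 2 * k)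
    (f := fun υ => g υ ^ 2)
    (fun υ => (totalDegree_pow _ _).trans (Nat.mul_le_mul_left _ (hg.1 υ))) hc2.integrable_coeff
  obtain ⟨P, hP, hPe⟩ := exists_eval_eq_gaussianAverage (√(1 - lam)) (√lam) hq
  refine ⟨P, hP, fun x => ?_, ?_⟩
  · rw [hPe, hΦ]
    simp only [norm2sq_zoom]
  · simp only [hPe, norm2sq_eq_gaussianAverage, ← hΦ]
    have h := integral_integral_eval_smul_add q (a := √(1 - lam)) (b := √lam)
      (by rw [Real.sq_sqrt (by linarith), Real.sq_sqrt h0]; ring)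
    refine h.trans ?_
    exact integral_congr_ae (Filter.Eventually.of_forall fun y => by simp)

/-- Two-norm retention for a nice distribution of degree-`k` polynomials: there is a
universal constant `C` such that for `0 ≤ λ ≤ 1` and `0 < β' < 1`, for `x ∼ N(0,1)^n`,
except with probability at most `β'`, we have
`E_υ[‖(g_υ)_{λ|x}‖₂²] ≥ (β'/(C·k))^{2k}·E_υ[‖g_υ‖₂²]`. -/
theorem two_norm_retention_low_degree :
    ∃ C : ℝ, 1 ≤ C ∧
      ∀ (n I k : ℕ) (g : (Fin I → ℝ) → MvPolynomial (Fin n) ℝ), NiceFamily n I k g →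
      ∀ lam β' : ℝ, 0 ≤ lam → lam ≤ 1 → 0 < β' → β' < 1 →
      gaussianN n {x | ¬ ((β' / (C * k)) ^ (2 * k) * (∫ υ, norm2sq (g υ) ∂(gaussianN I)) ≤
          ∫ υ, norm2sq (zoom (g υ) lam x) ∂(gaussianN I))} ≤ ENNReal.ofReal β' := by
  refine ⟨35200, by norm_num, fun n I k g hg lam β' h0 h1 hβ _ => ?_⟩
  obtain ⟨P, hP, hPe, hPm⟩ := hg.exists_polynomial_zoom h0 h1
  have hpos : ∀ x, 0 ≤ eval x P := fun x => by
    rw [hPe]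
    exact integral_nonneg fun υ => norm2sq_nonneg _
  have hμ0 : 0 ≤ ∫ υ, norm2sq (g υ) ∂(gaussianN I) := integral_nonneg fun υ => norm2sq_nonneg _
  simp only [← hPe]
  generalize ∫ υ, norm2sq (g υ) ∂(gaussianN I) = μ at hPm hμ0 ⊢
  rcases hμ0.eq_or_lt with rfl | hμ
  · simp [hpos]
  rcases Nat.eq_zero_or_pos k with rfl | hk
  · rw [totalDegree_eq_zero_iff_eq_C.1 (Nat.le_zero.1 hP)] at hPm ⊢
    simp only [eval_C, integral_const, probReal_univ, one_smul] at hPm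
    simp [hPm]
  · have hk0 : (0 : ℝ) < k := by exact_mod_cast hk
    have hint : ∫⁻ x, ENNReal.ofReal (eval x P) ∂(gaussianN n) = ENNReal.ofReal μ := by
      rw [← hPm, ofReal_integral_eq_lintegral_ofReal (integrable_eval_gaussianN P)
        (Filter.Eventually.of_forall hpos)]
    have h := gaussianN_sublevel_le (by omega) hP hpos hμ
      (by positivity : 0 < β' / (35200 * k)) hint
    refine (measure_mono fun x hx => ?_).trans (h.trans (ENNReal.ofReal_le_ofReal ?_))
    · exact (not_le.1 hx).le
    · apply le_of_eq
      push_cast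
      field_simp
      norm_num
end

section
/- There is a universal constant C such that the following holds. Let d ≥ 1, set D = (2d+1)², let r₀ : ℝ^n → ℝ be a polynomial of degree at most 2d with r₀(x) ≥ 0 for all x, let a, b ≥ 0 with a + b = 1 and b ≤ 1/(C·d^{10}), and for 1 ≤ j ≤ D set r_j = U_{a^{j/2}} r₀. Suppose x ∈ ℝ^n is a point such that r_j(x) ≈_γ r_{j+1}(x) for all 1 ≤ j ≤ D−1, where 0 ≤ γ ≤ 1/(12·D·(2d+1)). Then r₀(x) ≈_1 r₁(x), i.e., e^{−1} ≤ r₀(x)/r₁(x) ≤ e (or both values are 0). -/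
open MeasureTheory ProbabilityTheory MvPolynomial

/-- The Gaussian noise operator `U_ρ f = Σ_α ρ^{|α|}·f̂(α)·h_α`, applied to a function. -/
noncomputable def noiseOpF {n : ℕ} (ρ : ℝ) (f : (Fin n → ℝ) → ℝ) (x : Fin n → ℝ) : ℝ :=
  ∑' α : Fin n → ℕ, ρ ^ (∑ i, α i) * hermiteCoeffF f α * hermiteMv α x

/-- The Gaussian noise operator applied to a polynomial. -/
noncomputable def noiseOpP {n : ℕ} (ρ : ℝ) (g : MvPolynomial (Fin n) ℝ) :
    (Fin n → ℝ) → ℝ :=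
  noiseOpF ρ (fun x => eval x g)

/-- `a ≈_ν b`: either both are zero, or they have the same sign and
`e^{-ν} ≤ a/b ≤ e^ν`. -/
def MulClose (ν a b : ℝ) : Prop :=
  (a = 0 ∧ b = 0) ∨ (0 < a * b ∧ Real.exp (-ν) ≤ a / b ∧ a / b ≤ Real.exp ν)


/-- Polynomials are integrable with respect to the standard Gaussian. -/
lemma integrable_eval_gaussianReal (p : Polynomial ℝ) :
    Integrable (fun x => p.eval x) (gaussianReal 0 1) := by
  induction p using Polynomial.induction_on' with
  | add p q hp hq =>
    simp only [Polynomial.eval_add]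
    exact hp.add hq
  | monomial k c =>
    have h : MemLp id (k : ENNReal) (gaussianReal 0 1) :=
      memLp_id_gaussianReal' _ (by simp)
    have h' : Integrable (fun x : ℝ => x ^ k) (gaussianReal 0 1) := by
      refine (integrable_norm_iff (by fun_prop)).1 ?_
      simpa using h.integrable_norm_pow'
    simpa using h'.const_mul c

/-- Gaussian integration by parts for polynomials. -/
lemma integral_X_mul_gaussianReal (p : Polynomial ℝ) :
    ∫ x, (Polynomial.X * p).eval x ∂gaussianReal 0 1 =
      ∫ x, (Polynomial.derivative p).eval x ∂gaussianReal 0 1 := by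
  have key (q : Polynomial ℝ) : Integrable (fun x => gaussianPDFReal 0 1 x * q.eval x) := by
    have h := integrable_eval_gaussianReal q
    rw [gaussianReal_of_var_ne_zero _ one_ne_zero,
      integrable_withDensity_iff_integrable_smul' (measurable_gaussianPDF 0 1)
        (ae_of_all _ fun _ => gaussianPDF_lt_top)] at h
    simpa [toReal_gaussianPDF] using h
  have hd (x : ℝ) : HasDerivAt (gaussianPDFReal 0 1) (-x * gaussianPDFReal 0 1 x) x := by
    have h1 : HasDerivAt (fun y : ℝ => -(y - 0) ^ 2 / (2 * ((1 : NNReal) : ℝ))) (-x) x := by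
      have := (((hasDerivAt_id x).sub_const 0).pow 2).neg.div_const (2 * ((1 : NNReal) : ℝ))
      exact this.congr_deriv (by simp; ring)
    have := h1.exp.const_mul (√(2 * Real.pi * ((1 : NNReal) : ℝ)))⁻¹
    rw [gaussianPDFReal_def]
    exact this.congr_deriv (by ring)
  have hz := integral_eq_zero_of_hasDerivAt_of_integrable
    (f := fun x => gaussianPDFReal 0 1 x * p.eval x)
    (f' := fun x => gaussianPDFReal 0 1 x * (Polynomial.derivative p - Polynomial.X * p).eval x)
    (fun x => by
      refine ((hd x).mul (p.hasDerivAt x)).congr_deriv ?_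
      simp
      ring) (key _) (key _)
  have hs : ∫ x, (Polynomial.derivative p - Polynomial.X * p).eval x ∂gaussianReal 0 1 = 0 := by
    rw [integral_gaussianReal_eq_integral_smul one_ne_zero]
    simpa using hz
  simp only [Polynomial.eval_sub] at hs
  rw [integral_sub (integrable_eval_gaussianReal _) (integrable_eval_gaussianReal _)] at hs
  linarith

/-- The real Hermite polynomial. -/
noncomputable def realHermite (k : ℕ) : Polynomial ℝ :=
  (Polynomial.hermite k).map (Int.castRingHom ℝ)

lemma realHermite_succ (k : ℕ) : realHermite (k + 1) =
    Polynomial.X * realHermite k - Polynomial.derivative (realHermite k) := by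
  simp [realHermite, Polynomial.hermite_succ, Polynomial.derivative_map]

lemma realHermite_monic (k : ℕ) : (realHermite k).Monic :=
  (Polynomial.hermite_monic k).map _

lemma natDegree_realHermite (k : ℕ) : (realHermite k).natDegree = k := by
  rw [realHermite, (Polynomial.hermite_monic k).natDegree_map, Polynomial.natDegree_hermite]

lemma integral_realHermite_mul (k : ℕ) (p : Polynomial ℝ) :
    ∫ x, (realHermite k * p).eval x ∂gaussianReal 0 1 =
      ∫ x, (Polynomial.derivative^[k] p).eval x ∂gaussianReal 0 1 := by
  induction k generalizing p with
  | zero => simp [realHermite]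
  | succ k ih =>
    rw [Function.iterate_succ_apply, ← ih]
    have h := integral_X_mul_gaussianReal (realHermite k * p)
    have e1 : realHermite (k + 1) * p =
        Polynomial.X * (realHermite k * p) - Polynomial.derivative (realHermite k) * p := by
      rw [realHermite_succ]; ring
    have e2 : realHermite k * Polynomial.derivative p =
        Polynomial.derivative (realHermite k * p) - Polynomial.derivative (realHermite k) * p := by
      rw [Polynomial.derivative_mul]; ring
    rw [e1, e2]
    simp only [Polynomial.eval_sub]
    rw [integral_sub (integrable_eval_gaussianReal _) (integrable_eval_gaussianReal _),
      integral_sub (integrable_eval_gaussianReal _) (integrable_eval_gaussianReal _), h]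

lemma integral_realHermite_mul_of_lt {j k : ℕ} (h : j < k) :
    ∫ x, (realHermite k * realHermite j).eval x ∂gaussianReal 0 1 = 0 := by
  rw [integral_realHermite_mul,
    Polynomial.iterate_derivative_eq_zero (by rwa [natDegree_realHermite])]
  simp

lemma integral_realHermite_mul_self (k : ℕ) :
    ∫ x, (realHermite k * realHermite k).eval x ∂gaussianReal 0 1 = k.factorial := by
  have h : Polynomial.derivative^[k] (realHermite k) = Polynomial.C (k.factorial : ℝ) := by
    have hd : (Polynomial.derivative^[k] (realHermite k)).natDegree = 0 := by
      have := Polynomial.natDegree_iterate_derivative (realHermite k) k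
      rw [natDegree_realHermite] at this
      omega
    rw [Polynomial.eq_C_of_natDegree_eq_zero hd, Polynomial.coeff_iterate_derivative]
    have hl := (realHermite_monic k).coeff_natDegree
    rw [natDegree_realHermite] at hl
    simp [hl, Nat.descFactorial_self]
  rw [integral_realHermite_mul, h]
  simp

lemma hermiteFn_eq (k : ℕ) (t : ℝ) :
    hermiteFn k t = (realHermite k).eval t / Real.sqrt (Nat.factorial k) := rfl

lemma integrable_hermiteFn_mul (j k : ℕ) :
    Integrable (fun t => hermiteFn j t * hermiteFn k t) (gaussianReal 0 1) := by
  refine ((integrable_eval_gaussianReal (realHermite j * realHermite k)).div_const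
    (Real.sqrt j.factorial * Real.sqrt k.factorial)).congr (ae_of_all _ fun t => ?_)
  simp [hermiteFn_eq, div_mul_div_comm]

lemma integral_hermiteFn_mul (j k : ℕ) :
    ∫ t, hermiteFn j t * hermiteFn k t ∂gaussianReal 0 1 = if j = k then 1 else 0 := by
  have h : ∫ t, hermiteFn j t * hermiteFn k t ∂gaussianReal 0 1 =
      (∫ t, (realHermite j * realHermite k).eval t ∂gaussianReal 0 1) /
        (Real.sqrt j.factorial * Real.sqrt k.factorial) := by
    rw [← integral_div]
    refine integral_congr_ae (ae_of_all _ fun t => ?_)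
    simp [hermiteFn_eq, div_mul_div_comm]
  rw [h]
  rcases lt_trichotomy j k with hjk | rfl | hjk
  · rw [mul_comm (realHermite j), integral_realHermite_mul_of_lt hjk]
    simp [hjk.ne]
  · rw [integral_realHermite_mul_self, Real.mul_self_sqrt (by positivity)]
    simp [Nat.factorial_ne_zero]
  · rw [integral_realHermite_mul_of_lt hjk]
    simp [hjk.ne']

/-- Each power is a combination of Hermite polynomials of at most the same degree. -/
lemma exists_pow_eq_sum_hermiteFn (m : ℕ) :
    ∃ c : ℕ → ℝ, ∀ t : ℝ, t ^ m = ∑ k ∈ Finset.range (m + 1), c k * hermiteFn k t := by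
  suffices h : ∀ (m : ℕ) (p : Polynomial ℝ), p.degree < m →
      ∃ c : ℕ → ℝ, ∀ t : ℝ, p.eval t = ∑ k ∈ Finset.range m, c k * hermiteFn k t by
    obtain ⟨c, hc⟩ := h (m + 1) (Polynomial.X ^ m) (by
      rw [Polynomial.degree_X_pow]; exact_mod_cast Nat.lt_succ_self m)
    exact ⟨c, by simpa using hc⟩
  intro m
  induction m with
  | zero =>
    intro p hp
    have : p = 0 := by simpa [Polynomial.degree_eq_bot] using hp
    exact ⟨0, by simp [this]⟩
  | succ m ih =>
    intro p hp
    have hH : (Polynomial.C (p.coeff m) * realHermite m).coeff m = p.coeff m := by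
      have hl := (realHermite_monic m).coeff_natDegree
      rw [natDegree_realHermite] at hl
      simp [hl]
    obtain ⟨c, hc⟩ := ih (p - Polynomial.C (p.coeff m) * realHermite m) (by
      rw [Polynomial.degree_lt_iff_coeff_zero] at hp ⊢
      intro i hi
      rcases hi.eq_or_lt with rfl | hi
      · simp only [Polynomial.coeff_sub, hH, sub_self]
      · have hz : (realHermite m).coeff i = 0 :=
          Polynomial.coeff_eq_zero_of_natDegree_lt (by rwa [natDegree_realHermite])
        simp [hp i hi, hz])
    refine ⟨fun k => if k = m then p.coeff m * Real.sqrt m.factorial else c k, fun t => ?_⟩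
    have hs : Real.sqrt m.factorial ≠ 0 := by positivity
    rw [Finset.sum_range_succ, Finset.sum_congr rfl (g := fun k => c k * hermiteFn k t), ← hc]
    · simp only [if_true, hermiteFn_eq, Polynomial.eval_sub, Polynomial.eval_mul,
        Polynomial.eval_C]
      field_simp
      ring
    · intro k hk
      simp [(Finset.mem_range.1 hk).ne]

lemma integral_hermiteMv_mul {n : ℕ} (α β : Fin n → ℕ) :
    ∫ x, hermiteMv α x * hermiteMv β x ∂gaussianN n = if α = β then 1 else 0 := by
  simp only [hermiteMv, ← Finset.prod_mul_distrib, gaussianN]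
  rw [integral_fintype_prod_eq_prod
    (f := fun i (t : ℝ) => hermiteFn (α i) t * hermiteFn (β i) t)]
  simp only [integral_hermiteFn_mul]
  rw [Finset.prod_ite_zero]
  simp [funext_iff]

lemma integrable_hermiteMv_mul {n : ℕ} (α β : Fin n → ℕ) :
    Integrable (fun x => hermiteMv α x * hermiteMv β x) (gaussianN n) := by
  simp only [hermiteMv, ← Finset.prod_mul_distrib, gaussianN]
  exact Integrable.fintype_prod (f := fun i (t : ℝ) => hermiteFn (α i) t * hermiteFn (β i) t)
    fun i => integrable_hermiteFn_mul _ _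

lemma hermiteCoeffF_sum {n : ℕ} (s : Finset (Fin n → ℕ)) (c : (Fin n → ℕ) → ℝ)
    (β : Fin n → ℕ) :
    hermiteCoeffF (fun x => ∑ α ∈ s, c α * hermiteMv α x) β = if β ∈ s then c β else 0 := by
  simp only [hermiteCoeffF, Finset.sum_mul, mul_assoc]
  rw [integral_finsetSum _ fun α _ => (integrable_hermiteMv_mul α β).const_mul (c α)]
  simp [integral_const_mul, integral_hermiteMv_mul]

lemma noiseOpF_sum {n : ℕ} (s : Finset (Fin n → ℕ)) (c : (Fin n → ℕ) → ℝ) (ρ : ℝ)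
    (x : Fin n → ℝ) :
    noiseOpF ρ (fun x => ∑ α ∈ s, c α * hermiteMv α x) x =
      ∑ α ∈ s, ρ ^ (∑ i, α i) * c α * hermiteMv α x := by
  simp only [noiseOpF, hermiteCoeffF_sum]
  rw [tsum_eq_sum (s := s) fun α hα => by simp [hα]]
  exact Finset.sum_congr rfl fun α hα => by simp [hα]

/-- Every polynomial has a Hermite expansion of the same degree. -/
lemma exists_eval_eq_sum_hermiteMv {n D : ℕ} (r : MvPolynomial (Fin n) ℝ)
    (hr : r.totalDegree ≤ D) :
    ∃ (s : Finset (Fin n → ℕ)) (c : (Fin n → ℕ) → ℝ), (∀ α ∈ s, ∑ i, α i ≤ D) ∧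
      ∀ x, eval x r = ∑ α ∈ s, c α * hermiteMv α x := by
  have hmem : (fun x => eval x r) ∈
      Submodule.span ℝ (hermiteMv (n := n) '' {α | ∑ i, α i ≤ D}) := by
    have e : (fun x => eval x r) = ∑ m ∈ r.support, r.coeff m • fun x => ∏ i, x i ^ m i := by
      ext x
      simp [eval_eq']
    rw [e]
    refine Submodule.sum_mem _ fun m hm => Submodule.smul_mem _ _ ?_
    choose c hc using exists_pow_eq_sum_hermiteFn
    have e' : (fun x : Fin n → ℝ => ∏ i, x i ^ m i) =
        ∑ α ∈ Fintype.piFinset fun i => Finset.range (m i + 1),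
          (∏ i, c (m i) (α i)) • hermiteMv α := by
      ext x
      simp only [hc (m _) (x _), Finset.prod_univ_sum, hermiteMv, Finset.prod_mul_distrib,
        Finset.sum_apply, Pi.smul_apply, smul_eq_mul]
    rw [e']
    refine Submodule.sum_mem _ fun α hα =>
      Submodule.smul_mem _ _ (Submodule.subset_span ⟨α, ?_, rfl⟩)
    have hα' : ∀ i, α i ≤ m i := fun i =>
      Nat.lt_succ_iff.1 (Finset.mem_range.1 (Fintype.mem_piFinset.1 hα i))
    calc ∑ i, α i ≤ ∑ i, m i := Finset.sum_le_sum fun i _ => hα' i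
      _ = m.sum fun _ e => e := by rw [Finsupp.sum_fintype _ _ fun _ => rfl]
      _ ≤ r.totalDegree := le_totalDegree hm
      _ ≤ D := hr
  rw [Finsupp.mem_span_image_iff_linearCombination] at hmem
  obtain ⟨l, hl, hle⟩ := hmem
  refine ⟨l.support, l, fun α hα => hl hα, fun x => ?_⟩
  have := congrFun hle x
  rw [← this]
  simp [Finsupp.linearCombination_apply, Finsupp.sum]

/-- At a fixed point, `U_ρ r` is a polynomial in `ρ` whose value at `1` is `r`. -/
lemma exists_noiseOpP_eq_eval {n D : ℕ} (r : MvPolynomial (Fin n) ℝ)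
    (hr : r.totalDegree ≤ D) (x : Fin n → ℝ) :
    ∃ q : Polynomial ℝ, q.natDegree ≤ D ∧ q.eval 1 = eval x r ∧
      ∀ ρ, noiseOpP ρ r x = q.eval ρ := by
  obtain ⟨s, c, hs, hc⟩ := exists_eval_eq_sum_hermiteMv r hr
  refine ⟨∑ α ∈ s, Polynomial.C (c α * hermiteMv α x) * Polynomial.X ^ (∑ i, α i),
    Polynomial.natDegree_sum_le_of_forall_le _ _ fun α hα =>
      (Polynomial.natDegree_C_mul_X_pow_le _ _).trans (hs α hα), ?_, fun ρ => ?_⟩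
  · simp [Polynomial.eval_finsetSum, hc]
  · rw [noiseOpP, funext hc, noiseOpF_sum]
    simp only [Polynomial.eval_finsetSum, Polynomial.eval_mul, Polynomial.eval_C,
      Polynomial.eval_pow, Polynomial.eval_X]
    exact Finset.sum_congr rfl fun α _ => by ring

lemma abs_one_sub_pow_div_le {z : ℝ} (hz0 : 0 < z) (hz1 : z < 1) {K L N : ℕ} (hKL : K ≠ L)
    (hK : K ≤ N) (hL : L ≤ N) :
    |(1 - z ^ L) / (z ^ K - z ^ L)| ≤ (z ^ N)⁻¹ * (L / |(L : ℝ) - K|) := by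
  have h1 : |1 - z ^ L| ≤ L * (1 - z) := by
    rw [abs_of_nonneg (by linarith [pow_le_one₀ (n := L) hz0.le hz1.le])]
    have := one_add_mul_le_pow (a := z - 1) (by linarith) L
    rw [add_sub_cancel] at this
    linarith
  have aux : ∀ {K L : ℕ}, K < L → L ≤ N → z ^ N * (((L : ℝ) - K) * (1 - z)) ≤ z ^ K - z ^ L := by
    intro K L hlt hL
    obtain ⟨m, rfl⟩ := Nat.exists_eq_add_of_lt hlt
    have hg : (∑ i ∈ Finset.range (m + 1), z ^ i) * (1 - z) = 1 - z ^ (m + 1) :=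
      geom_sum_mul_neg z (m + 1)
    have hs : ((m : ℝ) + 1) * z ^ (m + 1) ≤ ∑ i ∈ Finset.range (m + 1), z ^ i := by
      have := Finset.card_nsmul_le_sum (Finset.range (m + 1)) (fun i => z ^ i) (z ^ (m + 1))
        fun i hi => pow_le_pow_of_le_one hz0.le hz1.le (Finset.mem_range.1 hi).le
      simpa using this
    have hN : z ^ N ≤ z ^ K * z ^ (m + 1) := by
      rw [← pow_add]
      exact pow_le_pow_of_le_one hz0.le hz1.le (by omega)
    push_cast
    calc z ^ N * (((K : ℝ) + m + 1 - K) * (1 - z))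
        ≤ z ^ K * z ^ (m + 1) * (((K : ℝ) + m + 1 - K) * (1 - z)) :=
          mul_le_mul_of_nonneg_right hN
            (mul_nonneg (by linarith [(Nat.cast_nonneg m : (0 : ℝ) ≤ m)]) (by linarith))
      _ = z ^ K * ((((m : ℝ) + 1) * z ^ (m + 1)) * (1 - z)) := by ring
      _ ≤ z ^ K * ((∑ i ∈ Finset.range (m + 1), z ^ i) * (1 - z)) := by
          have : 0 ≤ 1 - z := by linarith
          gcongr
      _ = z ^ K - z ^ (K + m + 1) := by rw [hg]; ring
  have h2 : z ^ N * (|(L : ℝ) - K| * (1 - z)) ≤ |z ^ K - z ^ L| := by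
    rcases hKL.lt_or_gt with h | h
    · have hc : (0 : ℝ) < (L : ℝ) - K := by simpa using h
      rw [abs_of_pos hc]
      exact (aux h hL).trans (le_abs_self _)
    · have hc : (L : ℝ) - K < 0 := by simpa using h
      rw [abs_of_neg hc, neg_sub, abs_sub_comm (z ^ K)]
      exact (aux h hK).trans (le_abs_self _)
  have hp : 0 < |(L : ℝ) - K| := abs_pos.2 (sub_ne_zero.2 (by exact_mod_cast hKL.symm))
  have hz : 0 < 1 - z := by linarith
  rw [abs_div]
  calc |1 - z ^ L| / |z ^ K - z ^ L| ≤ (L * (1 - z)) / (z ^ N * (|(L : ℝ) - K| * (1 - z))) := by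
        gcongr
    _ = _ := by field_simp

lemma factorial_mul_self_le (j k : ℕ) :
    (j + k).factorial * (j + k).factorial ≤ j.factorial * (j + k + k).factorial := by
  induction k with
  | zero => simp
  | succ k ih =>
    rw [show j + (k + 1) + (k + 1) = j + k + k + 1 + 1 by ring, show j + (k + 1) = j + k + 1 by ring,
      Nat.factorial_succ, Nat.factorial_succ (j + k + k + 1), Nat.factorial_succ (j + k + k)]
    have h : (j + k + 1) * (j + k + 1) ≤ (j + k + k + 1 + 1) * (j + k + k + 1) :=
      Nat.mul_le_mul (by omega) (by omega)
    calc _ = (j + k + 1) * (j + k + 1) * ((j + k).factorial * (j + k).factorial) := by ring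
      _ ≤ (j + k + k + 1 + 1) * (j + k + k + 1) * (j.factorial * (j + k + k).factorial) :=
        Nat.mul_le_mul h ih
      _ = _ := by ring

lemma prod_sq_div_le_two {k M : ℕ} (hk : 1 ≤ k) (hM : k ≤ M) :
    ∏ l ∈ (Finset.Icc 1 M).erase k, (((l ^ 2 : ℕ) : ℝ) / |((l ^ 2 : ℕ) : ℝ) - (k ^ 2 : ℕ)|) ≤ 2 := by
  have below : ∀ m, m < k → (∏ l ∈ Finset.Icc 1 m,
      (((l ^ 2 : ℕ) : ℝ) / |((l ^ 2 : ℕ) : ℝ) - (k ^ 2 : ℕ)|)) * (k + m).factorial =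
        (m.factorial : ℝ) ^ 2 * k * (k - 1 - m).factorial := by
    intro m
    induction m with
    | zero =>
      intro h
      obtain ⟨k, rfl⟩ := Nat.exists_eq_add_of_le' hk
      simp [Nat.factorial_succ]
    | succ m ih =>
      intro h
      obtain ⟨c, rfl⟩ := Nat.exists_eq_add_of_lt h
      have ih := ih (by omega)
      rw [Finset.prod_Icc_succ_top (by omega), ← add_assoc, Nat.factorial_succ]
      rw [show m + 1 + c + 1 - 1 - m = c + 1 by omega, Nat.factorial_succ c] at ih
      rw [show m + 1 + c + 1 - 1 - (m + 1) = c by omega, Nat.factorial_succ m]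
      have hneg : (((m + 1) ^ 2 : ℕ) : ℝ) - ((m + 1 + c + 1) ^ 2 : ℕ) =
          -(((c : ℝ) + 1) * (2 * m + c + 3)) := by push_cast; ring
      rw [hneg, abs_neg, abs_of_pos (by positivity)]
      have e : ((m + 1 + c + 1 + m + 1 : ℕ) : ℝ) = 2 * m + c + 3 := by push_cast; ring
      set P := ∏ l ∈ Finset.Icc 1 m, (((l ^ 2 : ℕ) : ℝ) /
        |((l ^ 2 : ℕ) : ℝ) - ((m + 1 + c + 1) ^ 2 : ℕ)|)
      rw [Nat.cast_mul, e]
      have : P * (((m + 1) ^ 2 : ℕ) / (((c : ℝ) + 1) * (2 * m + c + 3))) *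
          ((2 * m + c + 3) * ((m + 1 + c + 1 + m).factorial : ℝ)) =
          (P * ((m + 1 + c + 1 + m).factorial : ℝ)) * (((m + 1) ^ 2 : ℕ) / ((c : ℝ) + 1)) := by
        have : (2 * (m : ℝ) + c + 3) ≠ 0 := by positivity
        field_simp
      rw [this, ih]
      push_cast
      field_simp
  have above : ∀ j, (∏ l ∈ (Finset.Icc 1 (j + k)).erase k,
      (((l ^ 2 : ℕ) : ℝ) / |((l ^ 2 : ℕ) : ℝ) - (k ^ 2 : ℕ)|)) *
        (j.factorial * (j + k + k).factorial) = 2 * (((j + k).factorial : ℝ) *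
          (j + k).factorial) := by
    intro j
    induction j with
    | zero =>
      obtain ⟨k, rfl⟩ := Nat.exists_eq_add_of_le' hk
      have h := below k (by omega)
      have e : (Finset.Icc 1 (0 + (k + 1))).erase (k + 1) = Finset.Icc 1 k := by
        ext l; simp
      rw [e, show 0 + (k + 1) + (k + 1) = k + 1 + k + 1 by ring, Nat.factorial_succ (k + 1 + k),
        zero_add, Nat.factorial_succ k]
      simp only [Nat.add_sub_cancel, Nat.sub_self, Nat.factorial_zero] at h
      push_cast at h ⊢
      linear_combination (2 * (k : ℝ) + 2) * h
    | succ j ih =>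
      have e : (Finset.Icc 1 (j + 1 + k)).erase k =
          insert (j + 1 + k) ((Finset.Icc 1 (j + k)).erase k) := by
        ext l; simp; omega
      rw [e, Finset.prod_insert (by simp), show j + 1 + k + k = j + k + k + 1 by ring,
        show j + 1 + k = j + k + 1 by ring, Nat.factorial_succ, Nat.factorial_succ,
        Nat.factorial_succ]
      have hpos : (((j + k + 1) ^ 2 : ℕ) : ℝ) - (k ^ 2 : ℕ) =
          ((j : ℝ) + 1) * (j + k + k + 1) := by push_cast; ring
      rw [hpos, abs_of_pos (by positivity)]
      set P := ∏ l ∈ (Finset.Icc 1 (j + k)).erase k, (((l ^ 2 : ℕ) : ℝ) /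
        |((l ^ 2 : ℕ) : ℝ) - (k ^ 2 : ℕ)|)
      push_cast
      have : ((j : ℝ) + k + 1) ^ 2 / (((j : ℝ) + 1) * (j + k + k + 1)) * P *
          (((j : ℝ) + 1) * j.factorial * (((j : ℝ) + k + k + 1) * (j + k + k).factorial)) =
          ((j : ℝ) + k + 1) ^ 2 * (P * (j.factorial * (j + k + k).factorial)) := by
        have : ((j : ℝ) + k + k + 1) ≠ 0 := by positivity
        field_simp
      rw [this, ih]
      ring
  obtain ⟨j, rfl⟩ := Nat.exists_eq_add_of_le' hM
  have h := above j
  have hle : (((j + k).factorial : ℝ) * (j + k).factorial) ≤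
      j.factorial * (j + k + k).factorial := by exact_mod_cast factorial_mul_self_le j k
  have hpos : (0 : ℝ) < j.factorial * (j + k + k).factorial := by positivity
  exact le_of_mul_le_mul_right (by linarith) hpos

/-- Extrapolation to `1` of a polynomial that is nearly constant on the nodes `z ^ (k ^ 2)`. -/
lemma abs_eval_one_sub_le {p : Polynomial ℝ} {M : ℕ} (hp : p.natDegree < M) {z v δ : ℝ}
    (hz0 : 0 < z) (hz1 : z ≤ 1) (hz : 1 / 2 ≤ z ^ (M ^ 3))
    (h : ∀ k ∈ Finset.Icc 1 M, |p.eval (z ^ (k ^ 2)) - v| ≤ δ) :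
    |p.eval 1 - v| ≤ 4 * M * δ := by
  have hM : 1 ≤ M := by omega
  have hM' : (1 : ℝ) ≤ M := by exact_mod_cast hM
  have h1 := h 1 (by simp [hM])
  have hδ : 0 ≤ δ := (abs_nonneg _).trans h1
  rcases hz1.eq_or_lt with rfl | hz1
  · simp only [one_pow] at h1
    nlinarith
  have hinj : Set.InjOn (fun k : ℕ => z ^ (k ^ 2)) (Finset.Icc 1 M) := by
    intro i _ j _ hij
    have := (pow_right_strictAnti₀ hz0 hz1).injective hij
    exact Nat.pow_left_injective (n := 2) (by norm_num) this
  have hdeg : (p - Polynomial.C v).degree < (Finset.Icc 1 M).card := by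
    rw [Nat.card_Icc, Nat.add_sub_cancel]
    rw [Polynomial.degree_lt_iff_coeff_zero]
    intro i hi
    rw [Polynomial.coeff_sub, Polynomial.coeff_eq_zero_of_natDegree_lt (hp.trans_le hi),
      Polynomial.coeff_C_of_ne_zero (by omega), sub_zero]
  have hI := congrArg (Polynomial.eval 1) (Lagrange.eq_interpolate hinj hdeg)
  rw [Lagrange.interpolate_apply, Polynomial.eval_finsetSum] at hI
  simp only [Polynomial.eval_sub, Polynomial.eval_mul, Polynomial.eval_C] at hI
  rw [hI]
  have hb : ∀ k ∈ Finset.Icc 1 M,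
      |(Lagrange.basis (Finset.Icc 1 M) (fun k : ℕ => z ^ (k ^ 2)) k).eval 1| ≤ 4 := by
    intro k hk
    obtain ⟨hk1, hkM⟩ := Finset.mem_Icc.1 hk
    rw [Lagrange.basis, Polynomial.eval_prod, Finset.abs_prod]
    calc _ ≤ ∏ l ∈ (Finset.Icc 1 M).erase k, ((z ^ (M ^ 2))⁻¹ *
          (((l ^ 2 : ℕ) : ℝ) / |((l ^ 2 : ℕ) : ℝ) - (k ^ 2 : ℕ)|)) := by
          refine Finset.prod_le_prod (fun _ _ => abs_nonneg _) fun l hl => ?_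
          obtain ⟨hlk, hl⟩ := Finset.mem_erase.1 hl
          have hlM := (Finset.mem_Icc.1 hl).2
          have := abs_one_sub_pow_div_le hz0 hz1 (K := k ^ 2) (L := l ^ 2) (N := M ^ 2)
            (fun h => hlk (Nat.pow_left_injective (n := 2) (by norm_num) h).symm)
            (Nat.pow_le_pow_left hkM 2) (Nat.pow_le_pow_left hlM 2)
          have e : (Lagrange.basisDivisor (z ^ (k ^ 2)) (z ^ (l ^ 2))).eval 1 =
              (1 - z ^ (l ^ 2)) / (z ^ (k ^ 2) - z ^ (l ^ 2)) := by
            simp [Lagrange.basisDivisor, div_eq_inv_mul]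
          rwa [e]
      _ = (z ^ (M ^ 2 * (M - 1)))⁻¹ * ∏ l ∈ (Finset.Icc 1 M).erase k,
          (((l ^ 2 : ℕ) : ℝ) / |((l ^ 2 : ℕ) : ℝ) - (k ^ 2 : ℕ)|) := by
          rw [Finset.prod_mul_distrib, Finset.prod_const, Finset.card_erase_of_mem hk,
            Nat.card_Icc, Nat.add_sub_cancel, inv_pow, ← pow_mul]
      _ ≤ 2 * 2 := by
          refine mul_le_mul ?_ (prod_sq_div_le_two hk1 hkM)
            (Finset.prod_nonneg fun _ _ => by positivity) (by norm_num)
          have : 1 / 2 ≤ z ^ (M ^ 2 * (M - 1)) := hz.trans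
            (pow_le_pow_of_le_one hz0.le hz1.le (by
              calc M ^ 2 * (M - 1) ≤ M ^ 2 * M := Nat.mul_le_mul_left _ (Nat.sub_le _ _)
                _ = M ^ 3 := by ring))
          rw [inv_le_comm₀ (by linarith) (by norm_num)]
          linarith
      _ = 4 := by norm_num
  calc _ ≤ ∑ k ∈ Finset.Icc 1 M, δ * 4 := by
        refine (Finset.abs_sum_le_sum_abs _ _).trans (Finset.sum_le_sum fun k hk => ?_)
        rw [abs_mul]
        exact mul_le_mul (h k hk) (hb k hk) (abs_nonneg _) hδ
    _ = 4 * M * δ := by simp; ring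

lemma MulClose.abs_sub_le {γ u w : ℝ} (h : MulClose γ u w) :
    |w - u| ≤ (Real.exp γ - 1) * |u| := by
  rcases h with ⟨rfl, rfl⟩ | ⟨h0, h1, h2⟩
  · simp
  have hu : u ≠ 0 := by rintro rfl; simp at h0
  have hw : w ≠ 0 := by rintro rfl; simp at h0
  have hr : 0 < u / w := (Real.exp_pos _).trans_le h1
  have e : w - u = (w / u - 1) * u := by field_simp
  have hi : w / u = (u / w)⁻¹ := by simp
  have hup : w / u ≤ Real.exp γ := by
    rw [hi, inv_le_comm₀ hr (Real.exp_pos _), ← Real.exp_neg]; exact h1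
  have hlo : Real.exp (-γ) ≤ w / u := by
    rw [hi, le_inv_comm₀ (Real.exp_pos _) hr, Real.exp_neg, inv_inv]; exact h2
  have hamgm : 2 - Real.exp γ ≤ Real.exp (-γ) := by
    have h := Real.add_one_le_exp γ
    have h' := Real.add_one_le_exp (-γ)
    have : Real.exp γ * Real.exp (-γ) = 1 := by rw [← Real.exp_add]; simp
    nlinarith [sq_nonneg (Real.exp γ - 1), Real.exp_pos γ, Real.exp_pos (-γ)]
  rw [e, abs_mul]
  refine mul_le_mul_of_nonneg_right ?_ (abs_nonneg _)
  rw [abs_le]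
  constructor <;> linarith

lemma abs_sub_first_le {γ : ℝ} (hγ : 0 ≤ γ) {N : ℕ} (r : ℕ → ℝ)
    (h : ∀ j, 1 ≤ j → j + 1 ≤ N → MulClose γ (r j) (r (j + 1))) (i : ℕ) (hi : i + 1 ≤ N) :
    |r (i + 1) - r 1| ≤ (Real.exp (i * γ) - 1) * |r 1| := by
  induction i with
  | zero => simp
  | succ i ih =>
    have ih := ih (by omega)
    have hs := (h (i + 1) (by omega) hi).abs_sub_le
    have hE : 0 ≤ Real.exp γ - 1 := by linarith [Real.one_le_exp hγ]
    have hr : |r (i + 1)| ≤ Real.exp (i * γ) * |r 1| := by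
      have := abs_add_le (r (i + 1) - r 1) (r 1)
      rw [sub_add_cancel] at this
      linarith
    have ht := abs_add_le (r (i + 1 + 1) - r (i + 1)) (r (i + 1) - r 1)
    rw [sub_add_sub_cancel] at ht
    have he : Real.exp ((i + 1 : ℕ) * γ) = Real.exp γ * Real.exp (i * γ) := by
      rw [← Real.exp_add]; push_cast; ring_nf
    rw [he]
    linarith [mul_le_mul_of_nonneg_left hr hE]

lemma mulClose_one_of_abs_sub_le {u v : ℝ} (h : |u - v| ≤ |v| / 2) : MulClose 1 u v := by
  by_cases hv : v = 0
  · subst hv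
    left
    simpa using h
  right
  have hp := abs_pos.2 hv
  have e : u / v - 1 = (u - v) / v := by field_simp
  have hle : |u / v - 1| ≤ 1 / 2 := by
    rw [e, abs_div, div_le_iff₀ hp]
    linarith
  obtain ⟨h1, h2⟩ := abs_le.1 hle
  have h3 : 2 ≤ Real.exp 1 := by linarith [Real.add_one_le_exp (1 : ℝ)]
  refine ⟨?_, ?_, by linarith⟩
  · have : u * v = u / v * v ^ 2 := by field_simp
    rw [this]
    have : 0 < u / v := by linarith
    positivity
  · rw [Real.exp_neg]
    have : (Real.exp 1)⁻¹ ≤ 2⁻¹ := inv_anti₀ (by norm_num) h3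
    linarith

/-- Noise insensitivity extension lemma: there is a universal constant `C` such that
for `d ≥ 1`, `D = (2d+1)²`, a nonnegative polynomial `r₀` of degree at most `2d`,
`a + b = 1` with `0 ≤ b ≤ 1/(C·d^{10})`, and `r_j = U_{a^{j/2}} r₀`, if at a point `x`
we have `r_j(x) ≈_γ r_{j+1}(x)` for all `1 ≤ j ≤ D−1` where
`0 ≤ γ ≤ 1/(12·D·(2d+1))`, then `r₀(x) ≈_1 r₁(x)`. -/
theorem noise_insensitivity_extension :
    ∃ C : ℝ, 1 ≤ C ∧
      ∀ (n d : ℕ), 1 ≤ d →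
      ∀ r₀ : MvPolynomial (Fin n) ℝ, r₀.totalDegree ≤ 2 * d →
      (∀ x, 0 ≤ eval x r₀) →
      ∀ a b : ℝ, 0 ≤ a → 0 ≤ b → a + b = 1 → b ≤ 1 / (C * (d : ℝ) ^ 10) →
      ∀ γ : ℝ, 0 ≤ γ → γ ≤ 1 / (12 * ((2 * d + 1) ^ 2) * (2 * d + 1)) →
      ∀ x : Fin n → ℝ,
      (∀ j : ℕ, 1 ≤ j → j + 1 ≤ (2 * d + 1) ^ 2 →
        MulClose γ (noiseOpP (a ^ ((j : ℝ) / 2)) r₀ x)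
          (noiseOpP (a ^ (((j : ℝ) + 1) / 2)) r₀ x)) →
      MulClose 1 (eval x r₀) (noiseOpP (a ^ ((1 : ℝ) / 2)) r₀ x) := by
  refine ⟨54, by norm_num, ?_⟩
  intro n d hd r₀ hr₀ _ a b ha hb hab hbC γ hγ0 hγ x hclose
  obtain ⟨q, hqdeg, hq1, hq⟩ := exists_noiseOpP_eq_eval r₀ hr₀ x
  have hd1 : (1 : ℝ) ≤ d := by exact_mod_cast hd
  have hd10 : (d : ℝ) ^ 3 ≤ (d : ℝ) ^ 10 := pow_le_pow_right₀ hd1 (by norm_num)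
  have hd3 : (1 : ℝ) ≤ (d : ℝ) ^ 3 := one_le_pow₀ hd1
  have hb3 : b * (54 * (d : ℝ) ^ 3) ≤ 1 := by
    rw [le_div_iff₀ (by positivity)] at hbC
    nlinarith
  have hb1 : b ≤ 1 / 54 := by nlinarith
  have ha0 : 0 < a := by linarith
  set z := a ^ ((1 : ℝ) / 2) with hzdef
  have hz0 : 0 < z := Real.rpow_pos_of_pos ha0 _
  have hz1 : z ≤ 1 := Real.rpow_le_one ha (by linarith) (by norm_num)
  have haz : a ≤ z := by
    simpa only [Real.rpow_one] using Real.rpow_le_rpow_of_exponent_ge ha0 (by linarith : a ≤ 1)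
      (by norm_num : (1 : ℝ) / 2 ≤ 1)
  have hpow (j : ℕ) : a ^ ((j : ℝ) / 2) = z ^ j := by
    rw [hzdef, ← Real.rpow_natCast, ← Real.rpow_mul ha]
    congr 1
    ring
  have hzM : 1 / 2 ≤ z ^ ((2 * d + 1) ^ 3) := by
    have h1 : 1 / 2 ≤ a ^ ((2 * d + 1) ^ 3) := by
      have h := one_add_mul_le_pow (a := a - 1) (by linarith) ((2 * d + 1) ^ 3)
      rw [add_sub_cancel] at h
      refine le_trans ?_ h
      push_cast
      have h27 : (2 * (d : ℝ) + 1) ^ 3 ≤ 27 * (d : ℝ) ^ 3 := by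
        have : (2 * (d : ℝ) + 1) ^ 3 ≤ (3 * d) ^ 3 :=
          pow_le_pow_left₀ (by positivity) (by linarith) 3
        linarith [this, mul_pow 3 (d : ℝ) 3]
      have : a - 1 = -b := by linarith
      rw [this]
      nlinarith
    exact h1.trans (pow_le_pow_left₀ ha haz _)
  set M : ℝ := 2 * d + 1 with hMdef
  have hM3 : 3 ≤ M := by linarith
  have hMcast : ((2 * d + 1 : ℕ) : ℝ) = M := by push_cast; rfl
  have hε : M ^ 2 * γ ≤ 1 / (12 * M) := by
    calc M ^ 2 * γ ≤ M ^ 2 * (1 / (12 * M ^ 2 * M)) := by gcongr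
      _ = 1 / (12 * M) := by field_simp
  have hε' : 1 / (12 * M) ≤ 1 / 36 := by
    apply one_div_le_one_div_of_le <;> linarith
  have hexp : Real.exp (M ^ 2 * γ) - 1 ≤ 36 / 35 * (1 / (12 * M)) := by
    set t := 1 / (12 * M)
    have ht : 0 ≤ t := by positivity
    have h1 : Real.exp (M ^ 2 * γ) ≤ Real.exp t := Real.exp_le_exp.2 hε
    have h2 := Real.one_sub_le_exp_neg t
    have h3 : Real.exp t * Real.exp (-t) = 1 := by rw [← Real.exp_add]; simp
    nlinarith [Real.exp_pos t, mul_le_mul_of_nonneg_left h2 (Real.exp_pos t).le,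
      mul_nonneg ht (by linarith : 0 ≤ 1 / 36 - t)]
  have hnear := abs_sub_first_le hγ0 (N := (2 * d + 1) ^ 2) (fun j => q.eval (z ^ j))
    fun j h1 h2 => by
      have := hclose j h1 h2
      rwa [hq, hq, hpow, show ((j : ℝ) + 1) = ((j + 1 : ℕ) : ℝ) by push_cast; rfl, hpow] at this
  have hmain := abs_eval_one_sub_le (p := q) (M := 2 * d + 1) (by omega) (v := q.eval z)
    (δ := 36 / 35 * (1 / (12 * M)) * |q.eval z|) hz0 hz1 hzM (by
      intro k hk
      obtain ⟨hk1, hkM⟩ := Finset.mem_Icc.1 hk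
      have hk2 : k ^ 2 ≤ (2 * d + 1) ^ 2 := Nat.pow_le_pow_left hkM 2
      have hk0 : 1 ≤ k ^ 2 := Nat.one_le_pow _ _ hk1
      obtain ⟨i, hi⟩ := Nat.exists_eq_add_of_le' hk0
      have h := hnear i (by omega)
      simp only [pow_one] at h
      rw [hi]
      refine h.trans (mul_le_mul_of_nonneg_right (le_trans ?_ hexp) (abs_nonneg _))
      have hiM : (i : ℝ) ≤ M ^ 2 := by
        rw [← hMcast]
        exact_mod_cast (by omega : i ≤ (2 * d + 1) ^ 2)
      gcongr)
  rw [hq, ← hq1]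
  refine mulClose_one_of_abs_sub_le (hmain.trans ?_)
  rw [hMcast]
  have : 4 * M * (36 / 35 * (1 / (12 * M)) * |q.eval z|) = 12 / 35 * |q.eval z| := by
    field_simp
    ring
  rw [this]
  linarith [abs_nonneg (q.eval z)]
end
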